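/- arXiv:2412.11018 — 8 statements merged into one kernel-verified Lean document; each statement's English description precedes it below -/
import Mathlib

section
/- Let λ ≥ 1 be an integer and let G be a finite simple graph whose smallest adjacency eigenvalue satisfies λ_min(G) ≥ −λ. Let C be a clique in G of order c with c ≥ λ⁴ − 2λ³ + 3λ² − 3λ + 3. Then every vertex of G outside C has either at most λ² − λ neighbors in C, or at least c − (λ−1)² neighbors in C. -/
/-!
The smallest-eigenvalue hypothesis says that `A + λI` is positive semidefinite. Fix `x ∉ C` with
`m` neighbours and `n` non-neighbours in `C`, put `L = λ - 1`, and evaluate the quadratic form of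
`A + λI` at the vector equal to `-m(n + L)` at `x`, to `λ(n + L)` on the neighbours and to `-λm`
on the non-neighbours. Among the vectors constant on the three parts and with a given value on the
neighbours, the form is least at a multiple of this one, which explains the choice. The value of
the form there is `λ m (n + L) (λL(c + L) - m(n + L))`, so `m(n + L) ≤ λL(c + L)` when `m > 0` and
`n + L > 0` (`neighbor_product_le`).

If the dichotomy fails, then both `m` and `n + L` are at least `λL + 1`. Their sum is `c + L`, so
their product is at least `(λL + 1)(c + L - λL - 1)`, which exceeds `λL(c + L)` as soon as
`c + L > (λL + 1)²`; this is the assumption on `c`.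
-/

open SimpleGraph Matrix

open Classical in
/-- The real adjacency matrix of a simple graph. -/
noncomputable def adjMat {V : Type*} [Fintype V] (G : SimpleGraph V) : Matrix V V ℝ :=
  Matrix.of fun x y => if G.Adj x y then (1 : ℝ) else 0

/-- `μ` is an eigenvalue of the (real) adjacency matrix of `G`. -/
def HasAdjEigenvalue {V : Type*} [Fintype V] (G : SimpleGraph V) (μ : ℝ) : Prop :=
  ∃ f : V → ℝ, f ≠ 0 ∧ adjMat G *ᵥ f = μ • f

lemma adjMat_isHermitian {V : Type*} [Fintype V] (G : SimpleGraph V) :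
    (adjMat G).IsHermitian := by
  ext i j
  by_cases h : G.Adj i j <;> simp [adjMat, h, G.adj_comm j i]

/-- A lower bound on all the eigenvalues of `A` bounds its quadratic form from below, because
`A - bI` is a symmetric matrix with nonnegative spectrum. -/
lemma quadForm_nonneg {V : Type*} [Fintype V] [DecidableEq V] (G : SimpleGraph V) (b : ℝ)
    (hmin : ∀ μ : ℝ, HasAdjEigenvalue G μ → -b ≤ μ) (f : V → ℝ) :
    0 ≤ ∑ v, f v * (∑ w, adjMat G v w * f w + b * f v) := by
  have hH : (adjMat G + b • (1 : Matrix V V ℝ)).IsHermitian :=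
    (adjMat_isHermitian G).add (by ext i j; simp [Matrix.one_apply, eq_comm])
  have hP : (adjMat G + b • (1 : Matrix V V ℝ)).PosSemidef := by
    rw [hH.posSemidef_iff_eigenvalues_nonneg]
    intro i
    have h := hH.mulVec_eigenvectorBasis i
    have h2 := hmin (hH.eigenvalues i - b) ⟨hH.eigenvectorBasis i, ?_, ?_⟩
    · simp only [Pi.zero_apply]
      linarith
    · intro h0
      apply hH.eigenvectorBasis.orthonormal.ne_zero i
      ext j
      exact congrFun h0 j
    · rw [Matrix.add_mulVec, Matrix.smul_mulVec, Matrix.one_mulVec] at h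
      rw [sub_smul, ← h]
      simp
  have h := hP.dotProduct_mulVec_nonneg f
  rw [Matrix.add_mulVec, Matrix.smul_mulVec, Matrix.one_mulVec] at h
  simpa [dotProduct, Matrix.mulVec] using h

/-- The quadratic form of `A + bI` at a vector supported on a clique `C` and one vertex `x`
outside it, with value `p` at `x` and values `g` on `C`. -/
lemma clique_quadForm_nonneg {V : Type*} [Fintype V] [DecidableEq V]
    (G : SimpleGraph V) [DecidableRel G.Adj] (b : ℝ)
    (hmin : ∀ μ : ℝ, HasAdjEigenvalue G μ → -b ≤ μ)
    (C : Finset V) (hC : G.IsClique (C : Set V)) (x : V) (hx : x ∉ C) (p : ℝ) (g : V → ℝ) :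
    0 ≤ b * p ^ 2 + 2 * p * (∑ y ∈ C, if G.Adj x y then g y else 0) + (∑ y ∈ C, g y) ^ 2
      + (b - 1) * ∑ y ∈ C, g y ^ 2 := by
  set f : V → ℝ := fun v => if v = x then p else if v ∈ C then g v else 0 with hf
  have fx : f x = p := by simp [hf]
  have fC : ∀ y ∈ C, f y = g y := by
    intro y hy
    have : y ≠ x := fun h => hx (h ▸ hy)
    simp [hf, this, hy]
  have f0 : ∀ y, y ∉ insert x C → f y = 0 := by
    intro y hy
    rw [Finset.mem_insert, not_or] at hy
    simp [hf, hy.1, hy.2]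
  -- Both sums in the quadratic form may be restricted to the support `insert x C` of `f`.
  have restr : ∀ h : V → ℝ, (∀ y, y ∉ insert x C → h y = 0) →
      ∑ y, h y = h x + ∑ y ∈ C, h y := by
    intro h h0
    rw [← Finset.sum_insert hx]
    exact (Finset.sum_subset (Finset.subset_univ _) fun y _ hy => h0 y hy).symm
  have rowx : ∑ w, adjMat G x w * f w = ∑ y ∈ C, if G.Adj x y then g y else 0 := by
    rw [restr _ (fun y hy => by rw [f0 y hy, mul_zero])]
    have : adjMat G x x = 0 := by simp [adjMat]
    rw [this, zero_mul, zero_add]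
    refine Finset.sum_congr rfl fun y hy => ?_
    rw [fC y hy]
    by_cases h : G.Adj x y <;> simp [adjMat, h]
  have rowC : ∀ v ∈ C, ∑ w, adjMat G v w * f w =
      (if G.Adj x v then p else 0) + (∑ y ∈ C, g y - g v) := by
    intro v hv
    rw [restr _ (fun y hy => by rw [f0 y hy, mul_zero])]
    congr 1
    · rw [fx]
      by_cases h : G.Adj x v <;> simp [adjMat, h, G.adj_comm v x]
    · have e : ∀ w ∈ C, adjMat G v w * f w = g w - if w = v then g v else 0 := by
        intro w hw
        rw [fC w hw]
        by_cases h : w = v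
        · simp [adjMat, h]
        · have : G.Adj v w := hC hv hw (Ne.symm h)
          simp [adjMat, h, this]
      rw [Finset.sum_congr rfl e, Finset.sum_sub_distrib, Finset.sum_ite_eq', if_pos hv]
  have key := quadForm_nonneg G b hmin f
  rw [restr _ (fun y hy => by rw [f0 y hy, zero_mul]), rowx, fx] at key
  have e : ∀ v ∈ C, f v * (∑ w, adjMat G v w * f w + b * f v) =
      p * (if G.Adj x v then g v else 0) + g v * (∑ y ∈ C, g y) + (b - 1) * g v ^ 2 := by
    intro v hv
    rw [rowC v hv, fC v hv]
    split_ifs <;> ring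
  rw [Finset.sum_congr rfl e, Finset.sum_add_distrib, Finset.sum_add_distrib, ← Finset.mul_sum,
    ← Finset.mul_sum, ← Finset.sum_mul] at key
  linarith

/-- The bound `m(n + L) ≤ bL(m + n + L)` with `L = b - 1`. The positivity hypotheses allow dividing
the quadratic form at the test vector by its factor `b m (n + L)`. -/
lemma neighbor_product_le {V : Type*} [Fintype V] [DecidableEq V]
    (G : SimpleGraph V) [DecidableRel G.Adj] (b : ℝ) (hb : 0 < b)
    (hmin : ∀ μ : ℝ, HasAdjEigenvalue G μ → -b ≤ μ)
    (C : Finset V) (hC : G.IsClique (C : Set V)) (x : V) (hx : x ∉ C) (m n : ℝ)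
    (hm : m = ((C.filter (fun y => G.Adj x y)).card : ℝ)) (hn : n = (C.card : ℝ) - m)
    (hm0 : 0 < m) (hn0 : 0 < n + (b - 1)) :
    m * (n + (b - 1)) ≤ b * (b - 1) * (m + n + (b - 1)) := by
  have hcount : ∀ s t : ℝ, (∑ y ∈ C, if G.Adj x y then s else t) = m * s + n * t := by
    intro s t
    have h := Finset.card_filter_add_card_filter_not (s := C) (fun y => G.Adj x y)
    have h' : ((C.filter (fun y => ¬ G.Adj x y)).card : ℝ) = n := by
      rw [hn, hm, ← h]
      push_cast
      ring
    rw [Finset.sum_ite, Finset.sum_const, Finset.sum_const, nsmul_eq_mul, nsmul_eq_mul, h', ← hm]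
  have key := clique_quadForm_nonneg G b hmin C hC x hx (-(m * (n + (b - 1))))
    (fun y => if G.Adj x y then b * (n + (b - 1)) else -(b * m))
  have e1 : (∑ y ∈ C, if G.Adj x y then
      (if G.Adj x y then b * (n + (b - 1)) else -(b * m)) else 0) = m * (b * (n + (b - 1))) := by
    have h := hcount (b * (n + (b - 1))) 0
    rw [mul_zero, add_zero] at h
    rw [← h]
    exact Finset.sum_congr rfl fun y _ => by split_ifs <;> rfl
  have e2 : (∑ y ∈ C, (if G.Adj x y then b * (n + (b - 1)) else -(b * m)) ^ 2) =
      m * (b * (n + (b - 1))) ^ 2 + n * (-(b * m)) ^ 2 := by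
    rw [← hcount]
    exact Finset.sum_congr rfl fun y _ => by split_ifs <;> rfl
  rw [e1, e2, hcount] at key
  have hfac : 0 ≤ (b * m * (n + (b - 1))) *
      (b * (b - 1) * (m + n + (b - 1)) - m * (n + (b - 1))) := by
    refine key.trans_eq ?_
    ring
  have := nonneg_of_mul_nonneg_right hfac (by positivity)
  linarith

/-- If `λ ≥ 1` is an integer, `G` a finite graph with
`λ_min(G) ≥ -λ`, and `C` a clique of order `c ≥ λ⁴ - 2λ³ + 3λ² - 3λ + 3`,
then every vertex outside `C` has at most `λ² - λ` neighbors in `C`,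
or at least `c - (λ-1)²` neighbors in `C`. -/
theorem clique_neighbor_dichotomy {V : Type*} [Fintype V] [DecidableEq V]
    (G : SimpleGraph V) [DecidableRel G.Adj]
    (l : ℤ) (hl : 1 ≤ l)
    (hmin : ∀ μ : ℝ, HasAdjEigenvalue G μ → -(l : ℝ) ≤ μ)
    (C : Finset V) (hC : G.IsClique (C : Set V))
    (hcard : l ^ 4 - 2 * l ^ 3 + 3 * l ^ 2 - 3 * l + 3 ≤ (C.card : ℤ)) :
    ∀ x ∉ C,
      ((C.filter (fun y => G.Adj x y)).card : ℤ) ≤ l ^ 2 - l ∨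
      (C.card : ℤ) - (l - 1) ^ 2 ≤ ((C.filter (fun y => G.Adj x y)).card : ℤ) := by
  intro x hx
  by_contra! hcon
  obtain ⟨h1, h2⟩ := hcon
  set m : ℤ := ((C.filter (fun y => G.Adj x y)).card : ℤ) with hm
  set c : ℤ := (C.card : ℤ) with hc
  have hl0 : 0 ≤ l * (l - 1) := mul_nonneg (by linarith) (by linarith)
  have a1 : l * (l - 1) + 1 ≤ m := by linarith
  have a2 : l * (l - 1) + 1 ≤ c - m + (l - 1) := by linarith
  have hR := neighbor_product_le G (l : ℝ) (by exact_mod_cast hl) hmin C hC x hx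
    (m : ℝ) ((c - m : ℤ) : ℝ) (by simp [hm]) (by simp [hc])
    (by exact_mod_cast (by linarith : (0 : ℤ) < m))
    (by exact_mod_cast (by linarith : (0 : ℤ) < c - m + (l - 1)))
  have hZ : m * (c - m + (l - 1)) ≤ l * (l - 1) * (m + (c - m) + (l - 1)) := by
    exact_mod_cast hR
  -- Given their sum, two numbers at least `λL + 1` have least product when one equals `λL + 1`.
  have hprod := mul_nonneg (sub_nonneg.2 a1) (sub_nonneg.2 a2)
  nlinarith
end

section
/- Let λ ≥ 1 be an integer and let G be a finite simple graph with λ_min(G) ≥ −λ. If G contains K̃_{m,n} as an induced subgraph, where m, n are positive integers with n ≥ λ⁴ − 2λ³ + 2λ² − 2λ + 2, then m ≤ λ² − λ. -/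
/-! The matrix `A + l I`, with `A` the adjacency matrix of `G`, is positive semidefinite, hence so is
its principal submatrix on the copy of `K̃_{m,n}`. That submatrix is evaluated at the vector equal to
`l (n + l - 1)` on the `m` common neighbours, `-l m` on the other `n` clique vertices and
`-m (n + l - 1)` on the extra vertex. This vector is chosen so that its image vanishes outside the `m`
common neighbours; the quadratic form is then a positive multiple of the value taken there, which
is `l² (l - 1)² - (m - l (l - 1)) (n - (l - 1)²)`. This must be nonnegative, and so
`m ≥ l (l - 1) + 1` would force `n ≤ (l - 1)² (l² + 1)`, which is one less than the bound on `n`. -/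


open SimpleGraph Matrix

/-- `K̃_{m,n}`: the graph on `m+n+1` vertices consisting of a complete graph on the
first `m+n` vertices together with one extra vertex (the last one) adjacent to
exactly the first `m` of them. -/
def tildeK (m n : ℕ) : SimpleGraph (Fin (m + n + 1)) :=
  SimpleGraph.fromRel
    (fun i j => (i.val < m + n ∧ j.val < m + n) ∨ (i.val = m + n ∧ j.val < m))

/-- A lower bound `-l` on the adjacency eigenvalues makes `A + l I` positive semidefinite. -/
lemma posSemidef_adjMat_add {V : Type*} [Fintype V] [DecidableEq V] (G : SimpleGraph V) (l : ℝ)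
    (hmin : ∀ μ : ℝ, HasAdjEigenvalue G μ → -l ≤ μ) :
    (adjMat G + l • (1 : Matrix V V ℝ)).PosSemidef := by
  have hH : (adjMat G + l • (1 : Matrix V V ℝ)).IsHermitian := by
    ext i j
    simp only [adjMat, Matrix.conjTranspose_apply, Matrix.add_apply, Matrix.smul_apply,
      Matrix.of_apply, Matrix.one_apply, star_trivial]
    grind [G.adj_comm j i]
  rw [hH.posSemidef_iff_eigenvalues_nonneg]
  intro i
  have h := hH.mulVec_eigenvectorBasis i
  have hev : HasAdjEigenvalue G (hH.eigenvalues i - l) := by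
    refine ⟨(hH.eigenvectorBasis i).ofLp, fun h0 => ?_, ?_⟩
    · apply hH.eigenvectorBasis.orthonormal.ne_zero i
      ext k
      exact congrFun h0 k
    · rw [Matrix.add_mulVec, Matrix.smul_mulVec, Matrix.one_mulVec] at h
      rw [sub_smul, ← h, add_sub_cancel_right]
  have h2 := hmin _ hev
  change 0 ≤ hH.eigenvalues i
  linarith

/-- The vertices of `K̃_{m,n}`, split into the common neighbours, the remaining clique vertices and
the extra vertex. -/
def tildeKVertex (m n : ℕ) : (Fin m ⊕ Fin n) ⊕ Unit → Fin (m + n + 1)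
  | .inl (.inl i) => ⟨i, by omega⟩
  | .inl (.inr j) => ⟨m + j, by omega⟩
  | .inr _ => ⟨m + n, by omega⟩

/-- The vector equal to `a`, `b`, `c` on the three parts of `K̃_{m,n}`. -/
def partVec (m n : ℕ) (a b c : ℝ) : (Fin m ⊕ Fin n) ⊕ Unit → ℝ :=
  Sum.elim (Sum.elim (fun _ => a) fun _ => b) fun _ => c

lemma sum_diag_ite {k : ℕ} (l a : ℝ) (i : Fin k) :
    ∑ j, (if i = j then l else 1) * a = (k + l - 1) * a := by
  have h : ∀ j, (if i = j then l else 1) * a = a + if i = j then (l - 1) * a else 0 := by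
    intro j
    split_ifs <;> ring
  simp only [h, Finset.sum_add_distrib, Finset.sum_ite_eq, Finset.mem_univ, if_true]
  simp
  ring

/-- The quadratic form of `A + l I` on vectors constant on the three parts of an induced
`K̃_{m,n}`. -/
lemma tildeK_form_nonneg {V : Type*} [Fintype V] (G : SimpleGraph V) (l : ℝ)
    (hmin : ∀ μ : ℝ, HasAdjEigenvalue G μ → -l ≤ μ) (m n : ℕ) (e : tildeK m n ↪g G) (a b c : ℝ) :
    0 ≤ m * (a * ((m + l - 1) * a + n * b + c)) + n * (b * (m * a + (n + l - 1) * b))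
      + c * (m * a + l * c) := by
  classical
  set M := (adjMat G + l • (1 : Matrix V V ℝ)).submatrix (e ∘ tildeKVertex m n)
    (e ∘ tildeKVertex m n) with hM
  have hpos : M.PosSemidef := (posSemidef_adjMat_add G l hmin).submatrix _
  have hentry : ∀ u v, M u v = (if (tildeK m n).Adj (tildeKVertex m n u) (tildeKVertex m n v)
      then 1 else 0) + if tildeKVertex m n u = tildeKVertex m n v then l else 0 := by
    intro u v
    simp [hM, adjMat, Matrix.one_apply]
  have h11 : ∀ i j, M (.inl (.inl i)) (.inl (.inl j)) = if i = j then l else 1 := by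
    intro i j
    rw [hentry]
    by_cases h : i = j
    · simp [h]
    · have : (i : ℕ) < m + n ∧ (j : ℕ) < m + n := by omega
      simp [tildeK, tildeKVertex, h, Fin.val_inj, this]
  have h22 : ∀ i j, M (.inl (.inr i)) (.inl (.inr j)) = if i = j then l else 1 := by
    intro i j
    rw [hentry]
    by_cases h : i = j
    · simp [h]
    · simp [tildeK, tildeKVertex, h, Fin.val_inj]
  have h12 : ∀ i j, M (.inl (.inl i)) (.inl (.inr j)) = 1 := by
    intro i j
    rw [hentry]
    have h1 : (i : ℕ) ≠ m + j := by omega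
    have h2 : (i : ℕ) < m + n := by omega
    simp [tildeK, tildeKVertex, h1, h2]
  have h21 : ∀ i j, M (.inl (.inr i)) (.inl (.inl j)) = 1 := by
    intro i j
    rw [hentry]
    have h1 : m + i ≠ (j : ℕ) := by omega
    have h2 : (j : ℕ) < m + n := by omega
    simp [tildeK, tildeKVertex, h1, h2]
  have h13 : ∀ i j, M (.inl (.inl i)) (.inr j) = 1 := by
    intro i j
    rw [hentry]
    have h1 : (i : ℕ) ≠ m + n := by omega
    simp [tildeK, tildeKVertex, h1]
  have h31 : ∀ i j, M (.inr i) (.inl (.inl j)) = 1 := by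
    intro i j
    rw [hentry]
    have h1 : m + n ≠ (j : ℕ) := by omega
    simp [tildeK, tildeKVertex, h1]
  have h23 : ∀ i j, M (.inl (.inr i)) (.inr j) = 0 := by
    intro i j
    rw [hentry]
    have h1 : (i : ℕ) ≠ n := by omega
    simp [tildeK, tildeKVertex, h1]
  have h32 : ∀ i j, M (.inr i) (.inl (.inr j)) = 0 := by
    intro i j
    rw [hentry]
    have h1 : n ≠ (j : ℕ) := by omega
    simp [tildeK, tildeKVertex, h1]
  have h33 : ∀ i j, M (.inr i) (.inr j) = l := by
    intro i j
    rw [hentry]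
    simp
  have h := hpos.dotProduct_mulVec_nonneg (partVec m n a b c)
  simp only [dotProduct, mulVec, Fintype.sum_sum_type, partVec, Sum.elim_inl, Sum.elim_inr,
    Pi.star_apply, star_trivial, h11, h12, h13, h21, h22, h23, h31, h32, h33, sum_diag_ite] at h
  simp at h
  linarith

/-- If `λ ≥ 1` is an integer, `G` a finite graph with
`λ_min(G) ≥ -λ` that contains `K̃_{m,n}` as an induced subgraph, where `m, n ≥ 1`
and `n ≥ λ⁴ - 2λ³ + 2λ² - 2λ + 2`, then `m ≤ λ² - λ`. -/
theorem tildeK_m_bound {V : Type*} [Fintype V] (G : SimpleGraph V)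
    (l : ℤ) (hl : 1 ≤ l)
    (hmin : ∀ μ : ℝ, HasAdjEigenvalue G μ → -(l : ℝ) ≤ μ)
    (m n : ℕ) (hm : 1 ≤ m) (hn1 : 1 ≤ n)
    (hn : l ^ 4 - 2 * l ^ 3 + 2 * l ^ 2 - 2 * l + 2 ≤ (n : ℤ))
    (hemb : Nonempty (tildeK m n ↪g G)) :
    (m : ℤ) ≤ l ^ 2 - l := by
  obtain ⟨e⟩ := hemb
  have h := tildeK_form_nonneg G l hmin m n e (l * (n + l - 1)) (-(l * m)) (-(m * (n + l - 1)))
  have hz : (0 : ℤ) ≤ (m * (l * (n + l - 1))) *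
      (l ^ 2 * (l - 1) ^ 2 - (m - l * (l - 1)) * (n - (l - 1) ^ 2)) := by
    have : (0 : ℝ) ≤ (m * (l * (n + l - 1))) *
        (l ^ 2 * (l - 1) ^ 2 - (m - l * (l - 1)) * (n - (l - 1) ^ 2)) := by
      convert h using 1
      ring
    exact_mod_cast this
  have hcoef : (0 : ℤ) < m * (l * (n + l - 1)) := by
    have h1 : (0 : ℤ) < m := by omega
    have h2 : (0 : ℤ) < n + l - 1 := by omega
    have h3 : 0 < l := by omega
    positivity
  have hdet := nonneg_of_mul_nonneg_right hz hcoef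
  by_contra! hlt
  have h1 : (1 : ℤ) ≤ m - l * (l - 1) := by linarith
  have h2 : l ^ 2 * (l - 1) ^ 2 + 1 ≤ (n : ℤ) - (l - 1) ^ 2 := by linarith
  have h3 : 0 ≤ l ^ 2 * (l - 1) ^ 2 := by positivity
  nlinarith [mul_nonneg (sub_nonneg.2 h1) (by linarith : 0 ≤ (n : ℤ) - (l - 1) ^ 2)]
end

section
/- Assume hypotheses (H). Then every anti-clique of G has order at most s; that is, the maximum order s₀ of an anti-clique in G satisfies s₀ ≤ s. -/
/-!
The bound follows from regularity, the bound `e` on common neighbours, and the bound on `v`.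
For distinct non-adjacent `x`, `y`, neither vertex lies in the closed neighbourhood of the other,
so the closed neighbourhoods (of size `w + 1`) meet only in common neighbours of `x` and `y`, at
most `e` of them. By the second Bonferroni inequality, the closed neighbourhoods of an anti-clique
with `s + 1` elements together cover at least `(s + 1)(w + 1) - s(s + 1)e / 2 > v` vertices, which
is impossible. A larger anti-clique contains one of size `s + 1`.
-/

open SimpleGraph

/-- `C` is a maximal clique of `G`: a clique not properly contained in any other clique. -/
def IsMaxClique {V : Type*} (G : SimpleGraph V) (C : Finset V) : Prop :=
  G.IsClique (C : Set V) ∧ ∀ C' : Finset V, G.IsClique (C' : Set V) → C ⊆ C' → C' = C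

/-- An anti-clique: a set of pairwise non-adjacent vertices. -/
def IsAntiClique {V : Type*} (G : SimpleGraph V) (I : Finset V) : Prop :=
  ∀ x ∈ I, ∀ y ∈ I, x ≠ y → ¬ G.Adj x y

/-- A weak clique of `G` (w.r.t. parameters `s, w, e`): a maximal clique with at
least `w - (s-1)e + 1` vertices. -/
def IsWeakClique {V : Type*} (G : SimpleGraph V) (s w e : ℕ) (C : Finset V) : Prop :=
  IsMaxClique G C ∧ w - (s - 1) * e + 1 ≤ C.card

/-- The second Bonferroni inequality for closed neighbourhoods of an anti-clique. It is written
additively, which avoids truncated subtraction. -/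
theorem bonferroni_closedNeighborhood
    {V : Type*} [Fintype V] [DecidableEq V] (G : SimpleGraph V) [DecidableRel G.Adj]
    (w e : ℕ) (h1 : G.IsRegularOfDegree w)
    (h2 : ∀ x y : V, x ≠ y → ¬ G.Adj x y →
      (G.neighborFinset x ∩ G.neighborFinset y).card ≤ e)
    (I : Finset V) (hI : IsAntiClique G I) :
    I.card * (w + 1) ≤
      (I.biUnion fun x => insert x (G.neighborFinset x)).card + I.card.choose 2 * e := by
  induction I using Finset.induction_on with
  | empty => simp
  | insert a I ha ih =>
    have ih' := ih fun x hx y hy =>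
      hI x (Finset.mem_insert_of_mem hx) y (Finset.mem_insert_of_mem hy)
    have hcard : (insert a (G.neighborFinset a)).card = w + 1 := by
      rw [Finset.card_insert_of_notMem (by simp), G.card_neighborFinset_eq_degree, h1 a]
    have hinter : (insert a (G.neighborFinset a) ∩
        I.biUnion fun x => insert x (G.neighborFinset x)).card ≤ I.card * e := by
      rw [Finset.inter_biUnion]
      refine Finset.card_biUnion_le_card_mul _ _ _ fun x hx => ?_
      have hax : a ≠ x := fun h => ha (h ▸ hx)
      have hnadj : ¬ G.Adj a x :=
        hI a (Finset.mem_insert_self _ _) x (Finset.mem_insert_of_mem hx) hax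
      refine (Finset.card_le_card fun z hz => ?_).trans (h2 a x hax hnadj)
      simp only [Finset.mem_inter, Finset.mem_insert, mem_neighborFinset] at hz ⊢
      rcases hz with ⟨rfl | haz, rfl | hxz⟩
      · exact absurd rfl hax
      · exact absurd hxz.symm hnadj
      · exact absurd haz hnadj
      · exact ⟨haz, hxz⟩
    have hunion := Finset.card_union_add_card_inter (insert a (G.neighborFinset a))
      (I.biUnion fun x => insert x (G.neighborFinset x))
    have hchoose : (I.card + 1).choose 2 = I.card + I.card.choose 2 := by
      simp [Nat.choose_succ_succ' I.card 1]
    rw [Finset.biUnion_insert, Finset.card_insert_of_notMem ha, hchoose, add_mul, add_mul]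
    omega

/-- Under hypotheses (H), every anti-clique of `G` has order at most `s`. -/
theorem anticlique_card_le
    {V : Type*} [Fintype V] [DecidableEq V] (G : SimpleGraph V) [DecidableRel G.Adj]
    (s m n v w e : ℕ)
    (hs : 1 ≤ s) (hm : 1 ≤ m) (hn : 1 ≤ n) (hv : 1 ≤ v) (hw : 1 ≤ w) (he : 1 ≤ e)
    (hV : Fintype.card V = v)
    (h1 : G.IsRegularOfDegree w)
    (h2 : ∀ x y : V, x ≠ y → ¬ G.Adj x y →
      (G.neighborFinset x ∩ G.neighborFinset y).card ≤ e)
    (h3 : (s - 1) * e + m * s - 1 < w)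
    (h4 : v < (s + 1) * (w + 1) - s * (s + 1) * e / 2)
    (h5 : e + n ≤ m * s + 1)
    (h6 : m < e)
    (h7 : IsEmpty (tildeK (m + 1) n ↪g G))
    : ∀ I : Finset V, IsAntiClique G I → I.card ≤ s := by
  intro I hI
  by_contra! hlt
  obtain ⟨J, hJI, hJ⟩ := Finset.exists_subset_card_eq (Nat.succ_le_of_lt hlt)
  have hb := bonferroni_closedNeighborhood G w e h1 h2 J
    fun x hx y hy => hI x (hJI hx) y (hJI hy)
  have hle := Finset.card_le_univ (J.biUnion fun x => insert x (G.neighborFinset x))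
  have hchoose : (s + 1).choose 2 * e = s * (s + 1) * e / 2 := by
    -- the division in `h4` is exact because `s (s + 1)` is even
    rw [Nat.choose_two_right, Nat.add_sub_cancel, mul_comm (s + 1) s,
      Nat.div_mul_right_comm (Nat.even_mul_succ_self s).two_dvd]
  rw [hJ, Nat.succ_eq_add_one, hchoose] at hb
  omega
end

section
/- Assume hypotheses (H), and let s₀ be the maximum order of an anti-clique in G. Then there are exactly s₀ maximal cliques of G having at least w − (s−1)m + 1 vertices each, and every vertex of G lies in exactly one of these cliques. -/
/-!
Write `N(x)` for the neighbourhood of `x`.  Counting the closed neighbourhoods of a large anti-clique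
shows that anti-cliques have at most `s` elements (`card_antiClique_le`).  Forbidding `K̃_{m+1,n}` means
that a vertex outside a maximal clique `C` with at least `e + n` elements has at most `m` neighbours
in `C` (`card_nbrs_le`), so two such cliques share at most `m` vertices (`card_inter_le`).

Fix an anti-clique `I` of maximum order `s₀`.  For `i ∈ I`, the vertex `i` and its neighbours that are
adjacent to no other element of `I` form a clique (otherwise `I` could be enlarged), of order at least
`w - (s₀ - 1) e + 1 ≥ m s + 1`; it extends to a maximal clique `C i` (`exists_maxClique`).
These cliques cover `V` (`cover`): if `x` is in none of them, the representatives `i ∈ C i` can be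
replaced one at a time by elements of `C i` that are not adjacent to `x` nor to the other
representatives, because at most `m s₀` elements of `C i` are excluded; adding `x` gives an
anti-clique of order `s₀ + 1`.

Since `I` is an anti-clique, `i ∈ I` lies in no `C j` with `j ≠ i`, so covering `N(i)` gives
`|C i| ≥ w + 1 - (s₀ - 1) m`.  Then two of these cliques through a common vertex would give it more
than `w` neighbours, and a further maximal clique of order exceeding `m s` cannot be covered by the
`C i`, each of which meets it in at most `m` vertices.
-/

open SimpleGraph

/-! ### Orders of anti-cliques -/

/-- Inclusion–exclusion for closed neighbourhoods of an anti-clique of order `k`, truncated at pairwise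
intersections and doubled: `k (w + 1) - (k choose 2) e` is at most the order of their union. -/
theorem closedNbhd_count {V : Type*} [Fintype V] [DecidableEq V] (G : SimpleGraph V)
    [DecidableRel G.Adj] (w e : ℕ) (h1 : G.IsRegularOfDegree w)
    (h2 : ∀ x y : V, x ≠ y → ¬ G.Adj x y →
      (G.neighborFinset x ∩ G.neighborFinset y).card ≤ e) (I : Finset V) (hI : IsAntiClique G I) :
    2 * I.card * (w + 1) + I.card * e ≤
      2 * (I.biUnion fun a => insert a (G.neighborFinset a)).card + I.card * I.card * e := by
  induction I using Finset.induction_on with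
  | empty => simp
  | insert a I ha ih =>
    have ih := ih (fun x hx y hy => hI x (Finset.mem_insert_of_mem hx) y (Finset.mem_insert_of_mem hy))
    set U := I.biUnion fun a => insert a (G.neighborFinset a) with hU
    have hN : (insert a (G.neighborFinset a)).card = w + 1 := by
      rw [Finset.card_insert_of_notMem (by simp), G.card_neighborFinset_eq_degree, h1 a]
    have h_inter : (insert a (G.neighborFinset a) ∩ U).card ≤ I.card * e := by
      rw [hU, Finset.inter_biUnion]
      refine Finset.card_biUnion_le_card_mul _ _ _ fun b hb => ?_
      have hab : a ≠ b := fun h => ha (h ▸ hb)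
      have hn := hI a (Finset.mem_insert_self _ _) b (Finset.mem_insert_of_mem hb) hab
      refine (Finset.card_le_card fun z hz => ?_).trans (h2 a b hab hn)
      simp only [Finset.mem_inter, Finset.mem_insert, mem_neighborFinset] at hz ⊢
      rcases hz with ⟨rfl | hz, rfl | hz'⟩
      · exact absurd rfl hab
      · exact absurd hz'.symm hn
      · exact absurd hz hn
      · exact ⟨hz, hz'⟩
    have hun := Finset.card_union_add_card_inter (insert a (G.neighborFinset a)) U
    rw [Finset.biUnion_insert, Finset.card_insert_of_notMem ha, ← hU]
    nlinarith

theorem card_antiClique_le {V : Type*} [Fintype V] [DecidableEq V] (G : SimpleGraph V)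
    [DecidableRel G.Adj] (s w e : ℕ) (h1 : G.IsRegularOfDegree w)
    (h2 : ∀ x y : V, x ≠ y → ¬ G.Adj x y →
      (G.neighborFinset x ∩ G.neighborFinset y).card ≤ e)
    (h4 : Fintype.card V < (s + 1) * (w + 1) - s * (s + 1) * e / 2)
    (I : Finset V) (hI : IsAntiClique G I) : I.card ≤ s := by
  by_contra! hc
  obtain ⟨J, hJ, hJc⟩ := Finset.exists_subset_card_eq (show s + 1 ≤ I.card from hc)
  have h := closedNbhd_count G w e h1 h2 J (fun x hx y hy => hI x (hJ hx) y (hJ hy))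
  have hle := Finset.card_le_univ (J.biUnion fun a => insert a (G.neighborFinset a))
  rw [hJc] at h
  -- `s * (s + 1)` is even, so the division by `2` is exact
  obtain ⟨t, ht⟩ := Nat.even_mul_succ_self s
  have hd : s * (s + 1) * e / 2 = t * e := by
    rw [ht, ← two_mul, mul_assoc, Nat.mul_div_cancel_left _ (by norm_num)]
  rw [hd] at h4
  have h4' : Fintype.card V + t * e < (s + 1) * (w + 1) := by omega
  nlinarith [congrArg (· * e) ht]

/-! ### Neighbours of an outside vertex in a large maximal clique -/

/-- The forbidden subgraph in use: a vertex `x` outside a clique `A ∪ B`, adjacent to the `k`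
elements of `A` and to none of the `n` elements of `B`, spans with it a copy of `tildeK k n`. -/
theorem card_lt_of_tildeK_free {V : Type*} [DecidableEq V] (G : SimpleGraph V)
    (k n : ℕ) (h7 : IsEmpty (tildeK k n ↪g G)) (x : V) (A B : Finset V)
    (hC : G.IsClique ((A ∪ B : Finset V) : Set V)) (hx : x ∉ B) (hA : ∀ a ∈ A, G.Adj x a)
    (hB : ∀ b ∈ B, ¬ G.Adj x b) (hAc : A.card = k) (hBc : B.card = n) : False := by
  let a : Fin k → V := fun i => (A.equivFinOfCardEq hAc).symm i
  let b : Fin n → V := fun i => (B.equivFinOfCardEq hBc).symm i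
  have ha : ∀ i, a i ∈ A := fun i => ((A.equivFinOfCardEq hAc).symm i).2
  have hb : ∀ i, b i ∈ B := fun i => ((B.equivFinOfCardEq hBc).symm i).2
  have hai : Function.Injective a := Subtype.val_injective.comp (Equiv.injective _)
  have hbi : Function.Injective b := Subtype.val_injective.comp (Equiv.injective _)
  have hab : ∀ i j, a i ≠ b j := fun i j h => hB _ (hb j) (h ▸ hA _ (ha i))
  let g : Fin (k + n) → V := Fin.append a b
  have hgi : Function.Injective g := by
    rw [Fin.append_injective_iff]
    exact ⟨hai, hbi, hab⟩
  have hg : ∀ i, g i ∈ A ∪ B := by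
    intro i
    refine Fin.addCases (fun i => ?_) (fun i => ?_) i
    · simp [g, ha]
    · simp [g, hb]
  have hgx : ∀ i, G.Adj x (g i) ↔ i.val < k := by
    intro i
    refine Fin.addCases (fun i => ?_) (fun i => ?_) i
    · simp [g, hA _ (ha i)]
    · simp [g, hB _ (hb i)]
  have hne : ∀ i, g i ≠ x := by
    intro i h
    rcases Finset.mem_union.1 (hg i) with h' | h'
    · exact G.loopless.irrefl x (hA x (h ▸ h'))
    · exact hx (h ▸ h')
  have hgg : ∀ i j, G.Adj (g i) (g j) ↔ i ≠ j := fun i j =>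
    ⟨fun h hij => h.ne (congrArg g hij), fun h => hC (hg i) (hg j) (hgi.ne h)⟩
  let f : Fin (k + n + 1) → V := Fin.snoc g x
  have fi : Function.Injective f := by
    rw [Fin.snoc_injective_iff]
    exact ⟨hgi, fun ⟨i, hi⟩ => hne i hi⟩
  refine h7.false ⟨⟨f, fi⟩, ?_⟩
  intro i j
  simp only [Function.Embedding.coeFn_mk, tildeK, SimpleGraph.fromRel_adj]
  refine Fin.lastCases ?_ (fun i => ?_) i <;> refine Fin.lastCases ?_ (fun j => ?_) j
  · simp
  · have := j.2
    have : k + n ≠ j.val := by omega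
    simp [f, hgx, Fin.ext_iff, this, this.symm]
  · have := i.2
    have : k + n ≠ i.val := by omega
    simp [f, G.adj_comm _ x, hgx, Fin.ext_iff, this.symm]
  · simp [f, hgg, Fin.ext_iff]

theorem card_nbrs_le {V : Type*} [Fintype V] [DecidableEq V] (G : SimpleGraph V)
    [DecidableRel G.Adj] (m n e : ℕ)
    (h2 : ∀ x y : V, x ≠ y → ¬ G.Adj x y →
      (G.neighborFinset x ∩ G.neighborFinset y).card ≤ e)
    (h7 : IsEmpty (tildeK (m + 1) n ↪g G)) (C : Finset V) (hC : IsMaxClique G C)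
    (hc : e + n ≤ C.card) (x : V) (hx : x ∉ C) : (C.filter (G.Adj x)).card ≤ m := by
  by_contra! hlt
  obtain ⟨y, hy, hxy⟩ : ∃ y ∈ C, ¬ G.Adj x y := by
    by_contra! h
    have h' := hC.2 (insert x C) (by
      rw [Finset.coe_insert, SimpleGraph.isClique_insert]
      exact ⟨hC.1, fun b hb _ => h b hb⟩) (Finset.subset_insert _ _)
    exact hx (h' ▸ Finset.mem_insert_self x C)
  have hle : (C.filter (G.Adj x)).card ≤ e := by
    refine (Finset.card_le_card fun z hz => ?_).trans (h2 x y (fun h => hx (h ▸ hy)) hxy)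
    simp only [Finset.mem_filter, Finset.mem_inter, mem_neighborFinset] at hz ⊢
    exact ⟨hz.2, hC.1 hy hz.1 fun h => hxy (h ▸ hz.2)⟩
  have hsum := Finset.card_filter_add_card_filter_not (s := C) (G.Adj x)
  obtain ⟨A, hA, hAc⟩ := Finset.exists_subset_card_eq (show m + 1 ≤ _ from hlt)
  obtain ⟨B, hB, hBc⟩ := Finset.exists_subset_card_eq
    (show n ≤ (C.filter (fun z => ¬ G.Adj x z)).card by omega)
  refine card_lt_of_tildeK_free G (m + 1) n h7 x A B (hC.1.subset ?_) ?_ ?_ ?_ hAc hBc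
  · exact_mod_cast Finset.union_subset (hA.trans (Finset.filter_subset _ _))
      (hB.trans (Finset.filter_subset _ _))
  · exact fun h => hx (Finset.mem_filter.1 (hB h)).1
  · exact fun a h => (Finset.mem_filter.1 (hA h)).2
  · exact fun a h => (Finset.mem_filter.1 (hB h)).2

theorem card_inter_le {V : Type*} [Fintype V] [DecidableEq V] (G : SimpleGraph V)
    [DecidableRel G.Adj] (m : ℕ) (C D : Finset V) (hD : IsMaxClique G D) (hC : G.IsClique (C : Set V))
    (hCm : ∀ x ∉ C, (C.filter (G.Adj x)).card ≤ m) (hne : C ≠ D) : (C ∩ D).card ≤ m := by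
  obtain ⟨x, hxD, hxC⟩ : ∃ x ∈ D, x ∉ C := by
    by_contra! h
    exact hne (hD.2 C hC h)
  refine (Finset.card_le_card fun z hz => ?_).trans (hCm x hxC)
  obtain ⟨hz, hz'⟩ := Finset.mem_inter.1 hz
  exact Finset.mem_filter.2 ⟨hz, hD.1 hxD hz' fun h => hxC (h ▸ hz)⟩

/-! ### Cliques attached to a maximum anti-clique -/

/-- Each element `i` of a maximum anti-clique lies in a maximal clique of order at least
`w - (|I| - 1) e + 1`. -/
theorem exists_maxClique {V : Type*} [Fintype V] [DecidableEq V] (G : SimpleGraph V)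
    [DecidableRel G.Adj] (w e : ℕ) (h1 : G.IsRegularOfDegree w)
    (h2 : ∀ x y : V, x ≠ y → ¬ G.Adj x y →
      (G.neighborFinset x ∩ G.neighborFinset y).card ≤ e)
    (I : Finset V) (hI : IsAntiClique G I)
    (hmax : ∀ J : Finset V, IsAntiClique G J → J.card ≤ I.card) (i : V) (hi : i ∈ I) :
    ∃ C, IsMaxClique G C ∧ i ∈ C ∧ w + 1 ≤ C.card + (I.card - 1) * e := by
  set U := (I.erase i).biUnion fun j => G.neighborFinset j with hU
  set A := insert i (G.neighborFinset i \ U) with hA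
  have hmem : ∀ y ∈ A, y ∉ I.erase i ∧ ∀ j ∈ I.erase i, ¬ G.Adj j y ∧ ¬ G.Adj y j := by
    intro y hy
    rw [hA, Finset.mem_insert] at hy
    rcases hy with rfl | hy
    · refine ⟨Finset.notMem_erase _ _, fun j hj => ?_⟩
      obtain ⟨hj, hj'⟩ := Finset.mem_erase.1 hj
      exact ⟨hI j hj' y hi hj, hI y hi j hj' hj.symm⟩
    · simp only [hU, Finset.mem_sdiff, Finset.mem_biUnion, mem_neighborFinset, not_exists,
        not_and] at hy
      refine ⟨fun h => ?_, fun j hj => ⟨hy.2 j hj, fun h => hy.2 j hj h.symm⟩⟩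
      exact hI i hi y (Finset.mem_of_mem_erase h) hy.1.ne hy.1
  have hcl : G.IsClique (A : Set V) := by
    intro y hy z hz hyz
    by_contra hn
    obtain ⟨hy1, hy2⟩ := hmem y hy
    obtain ⟨hz1, hz2⟩ := hmem z hz
    have hJ := hmax (insert y (insert z (I.erase i))) (by
      intro a ha b hb hab
      simp only [Finset.mem_insert] at ha hb
      rcases ha with rfl | rfl | ha <;> rcases hb with rfl | rfl | hb
      · exact absurd rfl hab
      · exact hn
      · exact (hy2 _ hb).2
      · exact fun h => hn h.symm
      · exact absurd rfl hab
      · exact (hz2 _ hb).2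
      · exact (hy2 _ ha).1
      · exact (hz2 _ ha).1
      · exact hI a (Finset.mem_of_mem_erase ha) b (Finset.mem_of_mem_erase hb) hab)
    rw [Finset.card_insert_of_notMem (by simp only [Finset.mem_insert]; tauto),
      Finset.card_insert_of_notMem hz1] at hJ
    have := Finset.card_erase_add_one hi
    omega
  have h_inter : (G.neighborFinset i ∩ U).card ≤ (I.card - 1) * e := by
    rw [hU, Finset.inter_biUnion, ← Finset.card_erase_of_mem hi]
    refine Finset.card_biUnion_le_card_mul _ _ _ fun b hb => ?_
    obtain ⟨hb, hb'⟩ := Finset.mem_erase.1 hb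
    exact h2 i b hb.symm (hI i hi b hb' hb.symm)
  have hAc : A.card = (G.neighborFinset i \ U).card + 1 := by
    rw [hA, Finset.card_insert_of_notMem (by simp)]
  have hsum := Finset.card_sdiff_add_card_inter (G.neighborFinset i) U
  rw [G.card_neighborFinset_eq_degree, h1 i] at hsum
  obtain ⟨C, hAC, hC⟩ := Finite.exists_le_maximal
    (p := fun C : Finset V => G.IsClique (C : Set V)) hcl
  refine ⟨C, ⟨hC.prop, fun C' hC' h => ?_⟩, hAC (Finset.mem_insert_self _ _), ?_⟩
  · exact Finset.Subset.antisymm (hC.2 hC' h) h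
  · have := Finset.card_le_card hAC
    omega

/-- Cliques `C i ∋ i` indexed by a maximum anti-clique `I` cover the graph as soon as they are large
and every outside vertex has few neighbours in them. -/
theorem cover {V : Type*} [Fintype V] [DecidableEq V] (G : SimpleGraph V)
    [DecidableRel G.Adj] (m : ℕ) (I : Finset V) (hI : IsAntiClique G I)
    (hmax : ∀ J : Finset V, IsAntiClique G J → J.card ≤ I.card) (C : V → Finset V)
    (hC : ∀ i ∈ I, G.IsClique (C i : Set V)) (hi : ∀ i ∈ I, i ∈ C i)
    (hc : ∀ i ∈ I, m * I.card < (C i).card)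
    (hm : ∀ i ∈ I, ∀ x ∉ C i, ((C i).filter (G.Adj x)).card ≤ m) (x : V) :
    ∃ i ∈ I, x ∈ C i := by
  by_contra! hx
  -- `f` is a system of representatives of the cliques, made non-adjacent to `x` on a growing `J`
  have key : ∀ J : Finset V, J ⊆ I → ∃ f : V → V, (∀ i ∈ I, f i ∈ C i) ∧
      (∀ i ∈ I, ∀ j ∈ I, i ≠ j → f i ≠ f j ∧ ¬ G.Adj (f i) (f j)) ∧
      ∀ j ∈ J, ¬ G.Adj x (f j) := by
    intro J
    induction J using Finset.induction_on with
    | empty =>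
      exact fun _ => ⟨id, hi, fun i hi j hj h => ⟨h, hI i hi j hj h⟩, by simp⟩
    | insert a J ha ih =>
      intro hJ
      obtain ⟨f, hf1, hf2, hf3⟩ := ih ((Finset.subset_insert _ _).trans hJ)
      have haI : a ∈ I := hJ (Finset.mem_insert_self _ _)
      have hout : ∀ j ∈ I.erase a, f j ∉ C a := by
        intro j hj hmem
        obtain ⟨hj, hj'⟩ := Finset.mem_erase.1 hj
        obtain ⟨hne, hna⟩ := hf2 j hj' a haI hj
        exact hna (hC a haI hmem (hf1 a haI) hne)
      set Z := insert x ((I.erase a).image f) with hZ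
      have hZc : Z.card ≤ I.card := by
        have h3 := Finset.card_insert_le x ((I.erase a).image f)
        have h4 := Finset.card_image_le (s := I.erase a) (f := f)
        have h5 := Finset.card_erase_add_one haI
        rw [hZ]
        omega
      have hZo : ∀ z ∈ Z, z ∉ C a := by
        intro z hz
        rw [hZ, Finset.mem_insert, Finset.mem_image] at hz
        rcases hz with rfl | ⟨j, hj, rfl⟩
        · exact hx a haI
        · exact hout j hj
      obtain ⟨y, hy, hyZ⟩ : ∃ y ∈ C a, ∀ z ∈ Z, ¬ G.Adj z y := by
        by_contra! h
        have hsub : C a ⊆ Z.biUnion fun z => (C a).filter (G.Adj z) := by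
          intro y hy
          obtain ⟨z, hz, hzy⟩ := h y hy
          exact Finset.mem_biUnion.2 ⟨z, hz, Finset.mem_filter.2 ⟨hy, hzy⟩⟩
        have h3 := (Finset.card_le_card hsub).trans
          (Finset.card_biUnion_le_card_mul _ _ m fun z hz => hm a haI z (hZo z hz))
        have h4 := hc a haI
        nlinarith
      have hyf : ∀ j ∈ I, j ≠ a → f j ≠ y ∧ ¬ G.Adj (f j) y := by
        intro j hj hja
        have hj' := Finset.mem_erase.2 ⟨hja, hj⟩
        exact ⟨fun h => hout j hj' (h ▸ hy),
          hyZ _ (Finset.mem_insert_of_mem (Finset.mem_image_of_mem f hj'))⟩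
      refine ⟨Function.update f a y, ?_, ?_, ?_⟩
      · intro i hi
        by_cases h : i = a
        · subst h; simpa using hy
        · simpa [h] using hf1 i hi
      · intro i hi j hj hij
        by_cases h : i = a
        · subst h
          have := hyf j hj hij.symm
          rw [Function.update_self, Function.update_of_ne hij.symm]
          exact ⟨this.1.symm, fun h => this.2 h.symm⟩
        · by_cases h' : j = a
          · subst h'
            rw [Function.update_self, Function.update_of_ne hij]
            exact hyf i hi hij
          · rw [Function.update_of_ne h, Function.update_of_ne h']
            exact hf2 i hi j hj hij
      · intro j hj
        by_cases h : j = a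
        · subst h
          rw [Function.update_self]
          exact hyZ x (Finset.mem_insert_self _ _)
        · rw [Function.update_of_ne h]
          exact hf3 j ((Finset.mem_insert.1 hj).resolve_left h)
  obtain ⟨f, hf1, hf2, hf3⟩ := key I subset_rfl
  have hxf : x ∉ I.image f := by
    rw [Finset.mem_image]
    rintro ⟨i, hi, rfl⟩
    exact hx i hi (hf1 i hi)
  have h := hmax (insert x (I.image f)) (by
    intro a ha b hb hab
    simp only [Finset.mem_insert, Finset.mem_image] at ha hb
    rcases ha with rfl | ⟨i, hi, rfl⟩ <;> rcases hb with rfl | ⟨j, hj, rfl⟩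
    · exact absurd rfl hab
    · exact hf3 j hj
    · exact fun h => hf3 i hi h.symm
    · exact (hf2 i hi j hj fun h => hab (congrArg f h)).2)
  rw [Finset.card_insert_of_notMem hxf, Finset.card_image_of_injOn] at h
  · omega
  · intro i hi j hj hij
    by_contra hne
    exact (hf2 i hi j hj hne).1 hij

/-! ### The partition into large maximal cliques -/

/-- Under hypotheses (H), with `s₀` the maximum order of an anti-clique,
there are exactly `s₀` maximal cliques with at least `w - (s-1)m + 1` vertices each, and
every vertex lies in exactly one of them. -/
theorem strong_cliques_partition
    {V : Type*} [Fintype V] [DecidableEq V] (G : SimpleGraph V) [DecidableRel G.Adj]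
    (s m n v w e : ℕ)
    (hs : 1 ≤ s) (hm : 1 ≤ m) (hn : 1 ≤ n) (hv : 1 ≤ v) (hw : 1 ≤ w) (he : 1 ≤ e)
    (hV : Fintype.card V = v)
    (h1 : G.IsRegularOfDegree w)
    (h2 : ∀ x y : V, x ≠ y → ¬ G.Adj x y →
      (G.neighborFinset x ∩ G.neighborFinset y).card ≤ e)
    (h3 : (s - 1) * e + m * s - 1 < w)
    (h4 : v < (s + 1) * (w + 1) - s * (s + 1) * e / 2)
    (h5 : e + n ≤ m * s + 1)
    (h6 : m < e)
    (h7 : IsEmpty (tildeK (m + 1) n ↪g G))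
    (s₀ : ℕ) (hs₀ : IsGreatest {k : ℕ | ∃ I : Finset V, IsAntiClique G I ∧ I.card = k} s₀)
    : {C : Finset V | IsMaxClique G C ∧ w - (s - 1) * m + 1 ≤ C.card}.ncard = s₀ ∧
      ∀ x : V, ∃! C : Finset V,
        (IsMaxClique G C ∧ w - (s - 1) * m + 1 ≤ C.card) ∧ x ∈ C := by
  subst hV
  obtain ⟨⟨I, hI, rfl⟩, hub⟩ := hs₀
  have hmax : ∀ J : Finset V, IsAntiClique G J → J.card ≤ I.card := fun J hJ => hub ⟨J, hJ, rfl⟩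
  have hIs : I.card ≤ s := card_antiClique_le G s w e h1 h2 h4 I hI
  obtain ⟨r, rfl⟩ : ∃ r, s = r + 1 := ⟨s - 1, by omega⟩
  simp only [Nat.add_sub_cancel] at h3 ⊢
  have hre : r * e + m * (r + 1) ≤ w := by
    have : 1 ≤ m * (r + 1) := Nat.mul_pos hm hs
    omega
  have hrm : r * m ≤ r * e := Nat.mul_le_mul_left r h6.le
  have hIr : I.card - 1 ≤ r := by omega
  have hIe : (I.card - 1) * e ≤ r * e := Nat.mul_le_mul_right e hIr
  have hIm : (I.card - 1) * m ≤ r * m := Nat.mul_le_mul_right m hIr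
  have hmI : m * I.card ≤ m * (r + 1) := Nat.mul_le_mul_left m hIs
  choose! C hCmax hCi hCc using exists_maxClique G w e h1 h2 I hI hmax
  have hCbig : ∀ i ∈ I, m * (r + 1) < (C i).card := fun i hi => by
    have := hCc i hi
    omega
  have hCm : ∀ i ∈ I, ∀ x ∉ C i, ((C i).filter (G.Adj x)).card ≤ m := fun i hi =>
    card_nbrs_le G m n e h2 h7 (C i) (hCmax i hi) (by have := hCbig i hi; omega)
  have hcov := cover G m I hI hmax C (fun i hi => (hCmax i hi).1) hCi
    (fun i hi => hmI.trans_lt (hCbig i hi)) hCm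
  have hnot : ∀ i ∈ I, ∀ j ∈ I, i ≠ j → i ∉ C j := fun i hi j hj hij h =>
    hI i hi j hj hij ((hCmax j hj).1 h (hCi j hj) hij)
  have hCstrong : ∀ i ∈ I, w + 1 ≤ (C i).card + r * m := by
    intro i hi
    have hsub : G.neighborFinset i ⊆
        (C i).erase i ∪ (I.erase i).biUnion fun j => (C j).filter (G.Adj i) := by
      intro y hy
      rw [mem_neighborFinset] at hy
      obtain ⟨j, hj, hyj⟩ := hcov y
      rw [Finset.mem_union]
      by_cases h : j = i
      · subst h
        exact Or.inl (Finset.mem_erase.2 ⟨hy.ne', hyj⟩)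
      · exact Or.inr (Finset.mem_biUnion.2
          ⟨j, Finset.mem_erase.2 ⟨h, hj⟩, Finset.mem_filter.2 ⟨hyj, hy⟩⟩)
    have hc1 := (Finset.card_le_card hsub).trans (Finset.card_union_le _ _)
    have hc2 : ((I.erase i).biUnion fun j => (C j).filter (G.Adj i)).card ≤ (I.card - 1) * m := by
      rw [← Finset.card_erase_of_mem hi]
      refine Finset.card_biUnion_le_card_mul _ _ _ fun j hj => ?_
      obtain ⟨hj, hj'⟩ := Finset.mem_erase.1 hj
      exact hCm j hj' i (hnot i hi j hj' hj.symm)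
    have hc3 := Finset.card_erase_add_one (hCi i hi)
    rw [G.card_neighborFinset_eq_degree, h1 i] at hc1
    omega
  have hset : ∀ D : Finset V, (IsMaxClique G D ∧ w - r * m + 1 ≤ D.card) ↔ ∃ i ∈ I, C i = D := by
    intro D
    constructor
    · rintro ⟨hD, hDc⟩
      by_contra! hne
      have hsub : D ⊆ I.biUnion fun i => C i ∩ D := by
        intro y hy
        obtain ⟨j, hj, hyj⟩ := hcov y
        exact Finset.mem_biUnion.2 ⟨j, hj, Finset.mem_inter.2 ⟨hyj, hy⟩⟩
      have hle := (Finset.card_le_card hsub).trans (Finset.card_biUnion_le_card_mul _ _ m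
        fun i hi => card_inter_le G m (C i) D hD (hCmax i hi).1 (hCm i hi) (hne i hi))
      rw [mul_comm] at hle
      omega
    · rintro ⟨i, hi, rfl⟩
      have := hCstrong i hi
      exact ⟨hCmax i hi, by omega⟩
  have hinj : Set.InjOn C (I : Set V) := by
    intro i hi j hj hij
    by_contra hne
    exact hnot i hi j hj hne (hij ▸ hCi i hi)
  refine ⟨?_, fun x => ?_⟩
  · have : {D : Finset V | IsMaxClique G D ∧ w - r * m + 1 ≤ D.card} = C '' (I : Set V) := by
      ext D
      exact hset D
    rw [this, hinj.ncard_image, Set.ncard_coe_finset]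
  · obtain ⟨i, hi, hxi⟩ := hcov x
    refine ⟨C i, ⟨(hset _).2 ⟨i, hi, rfl⟩, hxi⟩, ?_⟩
    rintro D ⟨hD, hxD⟩
    obtain ⟨j, hj, rfl⟩ := (hset D).1 hD
    by_contra hne
    have h_inter := card_inter_le G m (C i) (C j) (hCmax j hj) (hCmax i hi).1 (hCm i hi) (Ne.symm hne)
    have hun := Finset.card_union_add_card_inter (C i) (C j)
    have hdeg : (C i ∪ C j).card ≤ w + 1 := by
      have hsub : C i ∪ C j ⊆ insert x (G.neighborFinset x) := by
        intro y hy
        rw [Finset.mem_insert, mem_neighborFinset, or_iff_not_imp_left]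
        intro hyx
        rcases Finset.mem_union.1 hy with hy | hy
        · exact (hCmax i hi).1 hxi hy (Ne.symm hyx)
        · exact (hCmax j hj).1 hxD hy (Ne.symm hyx)
      refine (Finset.card_le_card hsub).trans ((Finset.card_insert_le _ _).trans ?_)
      rw [G.card_neighborFinset_eq_degree, h1 x]
    -- `2 (w + 1 - r m) - m ≤ w + 1` contradicts `w ≥ r e + m (r + 1) ≥ 2 r m + m`
    have hi' := hCstrong i hi
    have hj' := hCstrong j hj
    have : m * (r + 1) = r * m + m := by ring
    omega
end

section
/- Assume hypotheses (H). If C is a weak clique of G and x is a vertex not in C, then x has at most m neighbors in C. -/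
/-!
A vertex `x` outside the maximal clique `C` is non-adjacent to some `y ∈ C`, and every neighbour
of `x` in `C` is a common neighbour of `x` and `y`; so `x` has at most `e` neighbours in `C`.
As `|C| ≥ w - (s-1)e + 1 ≥ ms + 1 ≥ e + n`, at least `n` vertices of `C` are not adjacent to `x`.
If `x` had `m + 1` neighbours in `C`, then these, `n` non-neighbours in `C`, and `x` itself
would induce a copy of `K̃_{m+1,n}` (`exists_tildeK_embedding`).
-/

open SimpleGraph

/-- A clique with at least `k` neighbours and at least `n` non-neighbours of an outside vertex `x`
yields an induced `K̃_{k,n}`. -/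
theorem exists_tildeK_embedding {V : Type*} (G : SimpleGraph V) [DecidableRel G.Adj]
    (k n : ℕ) (C : Finset V) (hC : G.IsClique (C : Set V)) (x : V) (hx : x ∉ C)
    (hk : k ≤ (C.filter (fun y => G.Adj x y)).card)
    (hn : n ≤ (C.filter (fun y => ¬ G.Adj x y)).card) :
    Nonempty (tildeK k n ↪g G) := by
  obtain ⟨A, hA, hAk⟩ := Finset.exists_subset_card_eq hk
  obtain ⟨B, hB, hBn⟩ := Finset.exists_subset_card_eq hn
  let a := (A.equivFinOfCardEq hAk).symm
  let b := (B.equivFinOfCardEq hBn).symm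
  have ha : ∀ i, (a i : V) ∈ C ∧ G.Adj x (a i) := fun i =>
    Finset.mem_filter.1 (hA (a i).2)
  have hb : ∀ i, (b i : V) ∈ C ∧ ¬ G.Adj x (b i) := fun i =>
    Finset.mem_filter.1 (hB (b i).2)
  have ainj : ∀ i j, (a i : V) = a j → i = j := fun i j h => a.injective (Subtype.ext h)
  have binj : ∀ i j, (b i : V) = b j → i = j := fun i j h => b.injective (Subtype.ext h)
  let f : Fin (k + n + 1) → V := fun i =>
    if h : i.val < k then a ⟨i.val, h⟩
    else if h' : i.val < k + n then b ⟨i.val - k, by omega⟩ else x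
  have fC : ∀ i, i.val < k + n → f i ∈ C := by
    intro i hi
    by_cases h : i.val < k
    · simpa [f, h] using (ha _).1
    · simpa [f, h, hi] using (hb _).1
  have fx : ∀ i, i.val = k + n → f i = x := by
    intro i hi
    simp [f, hi]
  have fadj : ∀ i, i.val < k + n → (G.Adj x (f i) ↔ i.val < k) := by
    intro i hi
    by_cases h : i.val < k
    · simpa [f, h] using (ha _).2
    · simpa [f, h, hi] using (hb _).2
  have finj : Function.Injective f := by
    intro i j hij
    have hi := i.isLt
    have hj := j.isLt
    rcases Nat.lt_or_ge i.val (k + n) with hi' | hi' <;>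
      rcases Nat.lt_or_ge j.val (k + n) with hj' | hj'
    · have hiff : i.val < k ↔ j.val < k := by rw [← fadj i hi', ← fadj j hj', hij]
      by_cases h : i.val < k
      · have h2 := hiff.1 h
        simp only [f, h, h2, dif_pos] at hij
        have := ainj _ _ hij
        simp only [Fin.mk.injEq] at this
        exact Fin.ext this
      · have h2 : ¬ j.val < k := fun h' => h (hiff.2 h')
        simp only [f, h, h2, hi', hj', dif_pos, dif_neg, not_false_eq_true] at hij
        have := binj _ _ hij
        simp only [Fin.mk.injEq] at this
        exact Fin.ext (by omega)
    · exact absurd (fx j (by omega) ▸ hij ▸ fC i hi') hx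
    · exact absurd (fx i (by omega) ▸ hij.symm ▸ fC j hj') hx
    · exact Fin.ext (by omega)
  refine ⟨⟨⟨f, finj⟩, ?_⟩⟩
  intro i j
  have hi := i.isLt
  have hj := j.isLt
  change G.Adj (f i) (f j) ↔ _
  rw [tildeK, SimpleGraph.fromRel_adj]
  by_cases hne : i = j
  · subst hne
    simp
  have hne' : i.val ≠ j.val := fun h => hne (Fin.ext h)
  rcases Nat.lt_or_ge i.val (k + n) with hi' | hi' <;>
    rcases Nat.lt_or_ge j.val (k + n) with hj' | hj'
  · have := hC (fC i hi') (fC j hj') (fun h => hne (finj h))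
    simp [this, hne, hi', hj']
  · rw [fx j (by omega), G.adj_comm, fadj i hi']
    exact ⟨fun h => ⟨hne, by omega⟩, fun h => by omega⟩
  · rw [fx i (by omega), fadj j hj']
    exact ⟨fun h => ⟨hne, by omega⟩, fun h => by omega⟩
  · omega

/-- Under hypotheses (H), a vertex outside a weak clique `C`
has at most `m` neighbors in `C`. -/
theorem weakClique_outside_nbrs_le
    {V : Type*} [Fintype V] [DecidableEq V] (G : SimpleGraph V) [DecidableRel G.Adj]
    (s m n v w e : ℕ)
    (hs : 1 ≤ s) (hm : 1 ≤ m) (hn : 1 ≤ n) (hv : 1 ≤ v) (hw : 1 ≤ w) (he : 1 ≤ e)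
    (hV : Fintype.card V = v)
    (h1 : G.IsRegularOfDegree w)
    (h2 : ∀ x y : V, x ≠ y → ¬ G.Adj x y →
      (G.neighborFinset x ∩ G.neighborFinset y).card ≤ e)
    (h3 : (s - 1) * e + m * s - 1 < w)
    (h4 : v < (s + 1) * (w + 1) - s * (s + 1) * e / 2)
    (h5 : e + n ≤ m * s + 1)
    (h6 : m < e)
    (h7 : IsEmpty (tildeK (m + 1) n ↪g G))
    : ∀ C : Finset V, IsWeakClique G s w e C →
      ∀ x ∉ C, (C.filter (fun y => G.Adj x y)).card ≤ m := by
  intro C ⟨⟨hC, hmax⟩, hcard⟩ x hx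
  by_contra! hlt
  obtain ⟨y, hyC, hxy⟩ : ∃ y ∈ C, ¬ G.Adj x y := by
    by_contra! hall
    have hcl : G.IsClique ((insert x C : Finset V) : Set V) := by
      rw [Finset.coe_insert]
      exact hC.insert fun b hb _ => hall b hb
    have := hmax _ hcl (Finset.subset_insert x C)
    exact hx (this ▸ Finset.mem_insert_self x C)
  have hne : x ≠ y := fun h => hx (h ▸ hyC)
  have hle : (C.filter (fun z => G.Adj x z)).card ≤ e := by
    refine le_trans (Finset.card_le_card fun z hz => ?_) (h2 x y hne hxy)
    obtain ⟨hzC, hxz⟩ := Finset.mem_filter.1 hz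
    have hyz : y ≠ z := fun h => hxy (h ▸ hxz)
    simpa [hxz] using hC hyC hzC hyz
  have hsum := Finset.card_filter_add_card_filter_not (s := C) (fun z => G.Adj x z)
  -- `1 ≤ m * s` makes the truncated subtraction in `h3` an honest one.
  have hms : 1 ≤ m * s := Nat.mul_pos hm hs
  generalize (s - 1) * e = t at *
  obtain ⟨φ⟩ := exists_tildeK_embedding G (m + 1) n C hC x hx hlt (by omega)
  exact h7.false φ
end

section
/- Assume hypotheses (H). If C and C′ are two distinct weak cliques of G, then |V(C) ∩ V(C′)| ≤ m. -/
/-! Let `C` be a clique, and let `x` be a vertex outside `C`. If `x` had `m + 1` neighbours and `n`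
non-neighbours in `C`, these together with `x` would induce a `K̃_{m+1,n}`. So a vertex with more
than `m` neighbours in `C` has fewer than `n` non-neighbours there.

Suppose two distinct weak cliques `C`, `C₂` share more than `m` vertices, and take `x ∈ C₂ \ C`. Then
`x` has more than `m` neighbours in `C`, hence fewer than `n` non-neighbours, but at least one, `y`,
because `C` is maximal. Every neighbour of `x` in `C` is also adjacent to `y`, so
`x` has at most `e` of them, and `|C| < e + n ≤ ms + 1`. The bound on `w` gives `|C| ≥ ms + 1`, a contradiction. -/

open SimpleGraph

/-- A vertex `x` adjacent to `m` vertices of a clique and non-adjacent to `n` others yields an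
induced copy of `K̃_{m,n}`. -/
theorem exists_tildeK_embedding_s6 {V : Type*} (G : SimpleGraph V) {C A B : Finset V} {m n : ℕ} {x : V}
    (hC : G.IsClique (C : Set V)) (hx : x ∉ C) (hAC : A ⊆ C) (hBC : B ⊆ C)
    (hA : A.card = m) (hB : B.card = n)
    (hAx : ∀ a ∈ A, G.Adj x a) (hBx : ∀ b ∈ B, ¬ G.Adj x b) :
    Nonempty (tildeK m n ↪g G) := by
  let a := (A.equivFinOfCardEq hA).symm
  let b := (B.equivFinOfCardEq hB).symm
  have ha : ∀ i, (a i : V) ∈ A := fun i => (a i).2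
  have hb : ∀ i, (b i : V) ∈ B := fun i => (b i).2
  have ainj : ∀ i j, (a i : V) = a j → i = j := fun i j h => a.injective (Subtype.ext h)
  have binj : ∀ i j, (b i : V) = b j → i = j := fun i j h => b.injective (Subtype.ext h)
  have hab : ∀ i j, (a i : V) ≠ b j := fun i j h => hBx _ (hb j) (h ▸ hAx _ (ha i))
  let f : Fin (m + n + 1) → V := fun i =>
    if h : i.val < m then a ⟨i.val, h⟩
    else if h' : i.val < m + n then b ⟨i.val - m, by omega⟩ else x
  have fa : ∀ i : Fin (m + n + 1), i.val < m → f i ∈ A := by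
    intro i h; simp only [f, h, dif_pos]; exact ha _
  have fb : ∀ i : Fin (m + n + 1), ¬ i.val < m → i.val < m + n → f i ∈ B := by
    intro i h h'; simp only [f, h, h', dif_pos, dif_neg, not_false_eq_true]; exact hb _
  have fx : ∀ i : Fin (m + n + 1), ¬ i.val < m + n → f i = x := by
    intro i h
    have h' : ¬ i.val < m := by omega
    simp only [f, h, h', dif_neg, not_false_eq_true]
  have fC : ∀ i : Fin (m + n + 1), i.val < m + n → f i ∈ C := by
    intro i h
    by_cases h' : i.val < m
    · exact hAC (fa i h')
    · exact hBC (fb i h' h)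
  have finj : Function.Injective f := by
    intro i j hij
    by_cases hi : i.val < m + n
    · by_cases hj : j.val < m + n
      · by_cases hi' : i.val < m <;> by_cases hj' : j.val < m <;>
          simp only [f, hi, hj, hi', hj', dif_pos, dif_neg, not_false_eq_true] at hij
        · have := ainj _ _ hij
          simp only [Fin.mk.injEq] at this
          exact Fin.ext this
        · exact absurd hij (hab _ _)
        · exact absurd hij.symm (hab _ _)
        · have := binj _ _ hij
          simp only [Fin.mk.injEq] at this
          exact Fin.ext (by omega)
      · exact absurd (fC i hi) (by rw [hij, fx j hj]; exact hx)
    · by_cases hj : j.val < m + n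
      · exact absurd (fC j hj) (by rw [← hij, fx i hi]; exact hx)
      · exact Fin.ext (by omega)
  have fxadj : ∀ j : Fin (m + n + 1), j.val < m + n → (G.Adj x (f j) ↔ j.val < m) := by
    intro j hj
    by_cases hj' : j.val < m
    · exact iff_of_true (hAx _ (fa j hj')) hj'
    · exact iff_of_false (hBx _ (fb j hj' hj)) hj'
  refine ⟨⟨⟨f, finj⟩, ?_⟩⟩
  intro i j
  simp only [Function.Embedding.coeFn_mk, tildeK, SimpleGraph.fromRel_adj]
  by_cases hij : i = j
  · simp [hij]
  have hne : i.val ≠ j.val := fun h => hij (Fin.ext h)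
  by_cases hi : i.val < m + n <;> by_cases hj : j.val < m + n
  · exact iff_of_true (hC (fC i hi) (fC j hj) (finj.ne hij)) ⟨hij, by omega⟩
  · rw [fx j hj, G.adj_comm, fxadj i hi]
    simp only [ne_eq, hij, not_false_eq_true, true_and]
    omega
  · rw [fx i hi, fxadj j hj]
    simp only [ne_eq, hij, not_false_eq_true, true_and]
    omega
  · omega

/-- Under hypotheses (H), two distinct weak cliques meet in at
most `m` vertices. -/
theorem weakCliques_inter_le
    {V : Type*} [Fintype V] [DecidableEq V] (G : SimpleGraph V) [DecidableRel G.Adj]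
    (s m n v w e : ℕ)
    (hs : 1 ≤ s) (hm : 1 ≤ m) (hn : 1 ≤ n) (hv : 1 ≤ v) (hw : 1 ≤ w) (he : 1 ≤ e)
    (hV : Fintype.card V = v)
    (h1 : G.IsRegularOfDegree w)
    (h2 : ∀ x y : V, x ≠ y → ¬ G.Adj x y →
      (G.neighborFinset x ∩ G.neighborFinset y).card ≤ e)
    (h3 : (s - 1) * e + m * s - 1 < w)
    (h4 : v < (s + 1) * (w + 1) - s * (s + 1) * e / 2)
    (h5 : e + n ≤ m * s + 1)
    (h6 : m < e)
    (h7 : IsEmpty (tildeK (m + 1) n ↪g G))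
    : ∀ C C₂ : Finset V, IsWeakClique G s w e C → IsWeakClique G s w e C₂ → C ≠ C₂ →
      (C ∩ C₂).card ≤ m := by
  intro C C₂ hC hC₂ hne
  obtain ⟨⟨hCc, hCmax⟩, hCcard⟩ := hC
  obtain ⟨⟨hC₂c, hC₂max⟩, -⟩ := hC₂
  by_contra! hlt
  obtain ⟨x, hx₂, hx⟩ : ∃ x ∈ C₂, x ∉ C := by
    by_contra! h
    exact hne (hC₂max C hCc h)
  obtain ⟨y, hyC, hxy⟩ : ∃ y ∈ C, ¬ G.Adj x y := by
    by_contra! h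
    have hcl : G.IsClique ((insert x C : Finset V) : Set V) := by
      rw [Finset.coe_insert]
      exact hCc.insert fun b hb _ => h b hb
    exact hx (hCmax _ hcl (Finset.subset_insert x C) ▸ Finset.mem_insert_self x C)
  have hadj : m + 1 ≤ (C.filter (G.Adj x)).card := by
    refine le_trans hlt (Finset.card_le_card fun z hz => ?_)
    rw [Finset.mem_inter] at hz
    exact Finset.mem_filter.2 ⟨hz.1, hC₂c hx₂ hz.2 fun h => hx (h ▸ hz.1)⟩
  have hnon : (C.filter fun z => ¬ G.Adj x z).card < n := by
    by_contra! h
    obtain ⟨A, hA, hAcard⟩ := Finset.exists_subset_card_eq hadj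
    obtain ⟨B, hB, hBcard⟩ := Finset.exists_subset_card_eq h
    exact not_isEmpty_iff.2 (exists_tildeK_embedding_s6 G hCc hx
      (hA.trans (Finset.filter_subset _ _)) (hB.trans (Finset.filter_subset _ _)) hAcard hBcard
      (fun a ha => (Finset.mem_filter.1 (hA ha)).2)
      (fun b hb => (Finset.mem_filter.1 (hB hb)).2)) h7
  have hcommon : (C.filter (G.Adj x)).card ≤ e := by
    refine le_trans (Finset.card_le_card fun z hz => ?_) (h2 x y (fun h => hx (h ▸ hyC)) hxy)
    obtain ⟨hzC, hxz⟩ := Finset.mem_filter.1 hz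
    rw [Finset.mem_inter, mem_neighborFinset, mem_neighborFinset]
    exact ⟨hxz, hCc hyC hzC fun h => hxy (h ▸ hxz)⟩
  have hsum := Finset.card_filter_add_card_filter_not (s := C) (G.Adj x)
  -- Positivity of `m * s` keeps the truncated subtraction in the bound on `w` exact.
  have hms : 1 ≤ m * s := Nat.mul_pos hm hs
  omega
end

section
/- Assume hypotheses (H). Then every vertex of G lies in some weak clique; equivalently, the union of the vertex sets of the weak cliques of G is all of V(G). -/
/-!
By Bonferroni's inequality for closed neighbourhoods, the bound on `v` forces every anti-clique to
have at most `s` vertices (`antiClique_card_le`). If `I` is an anti-clique of maximum size and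
`y ∈ I`, then the vertices of `N[y]` lying in no other `N[u]`, `u ∈ I`, form a clique `B`
(`exists_private_clique`), of size at least `w + 1 - (s - 1)e ≥ ms + 1`; a maximal clique `C ⊇ B`
is therefore a weak clique containing `y`. Conversely, a vertex outside a weak clique has at most
`m` neighbours in it, since `G` contains no `K̃_{m+1,n}` (`card_neighbors_le`).

Suppose `x` lies in no weak clique, and let `I` be a maximum anti-clique with as few neighbours of
`x` as possible. Then `x ∉ I`, and by maximality `x` is adjacent to some `y ∈ I`. At most `m`
vertices of the corresponding `B` are adjacent to `x`, so some `z ∈ B` is not. Replacing `y`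
by `z` gives a maximum anti-clique with fewer neighbours of `x`, a contradiction.
-/


open SimpleGraph

/-! ### Closed neighbourhoods and the size of anti-cliques -/

/-- The closed neighbourhood `N[a]`: the vertex `a` together with its neighbours. -/
def closedNbhd {V : Type*} [Fintype V] [DecidableEq V] (G : SimpleGraph V)
    [DecidableRel G.Adj] (a : V) : Finset V :=
  insert a (G.neighborFinset a)

section
variable {V : Type*} [Fintype V] [DecidableEq V] (G : SimpleGraph V) [DecidableRel G.Adj]

lemma mem_closedNbhd (a z : V) : z ∈ closedNbhd G a ↔ z = a ∨ G.Adj a z := by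
  simp [closedNbhd]

lemma card_closedNbhd {w : ℕ} (h1 : G.IsRegularOfDegree w) (a : V) :
    (closedNbhd G a).card = w + 1 := by
  rw [closedNbhd, Finset.card_insert_of_notMem (by simp), SimpleGraph.card_neighborFinset_eq_degree,
    h1 a]

/-- For an anti-clique `J ∪ {a}`, each `y ∈ J` accounts for at most `e` vertices of `N[a]`, since
`N[a] ∩ N[y]` consists of the common neighbours of `a` and `y`. -/
lemma card_inter_biUnion_le {e : ℕ}
    (h2 : ∀ x y : V, x ≠ y → ¬ G.Adj x y →
      (G.neighborFinset x ∩ G.neighborFinset y).card ≤ e)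
    (a : V) (J : Finset V) (ha : a ∉ J) (hJ : ∀ y ∈ J, ¬ G.Adj a y) :
    (closedNbhd G a ∩ J.biUnion (closedNbhd G)).card ≤ J.card * e := by
  rw [Finset.inter_biUnion]
  refine Finset.card_biUnion_le_card_mul _ _ _ fun y hy => ?_
  have hne : a ≠ y := fun h => ha (h ▸ hy)
  refine le_trans (Finset.card_le_card ?_) (h2 a y hne (hJ y hy))
  intro z hz
  simp only [Finset.mem_inter, mem_closedNbhd, SimpleGraph.mem_neighborFinset] at hz ⊢
  have h3 := hJ y hy
  obtain ⟨rfl | h, rfl | h'⟩ := hz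
  · exact absurd rfl hne
  · exact absurd h'.symm h3
  · exact absurd h h3
  · exact ⟨h, h'⟩

/-- Bonferroni's inequality for the closed neighbourhoods of the vertices of an anti-clique,
doubled so as to avoid dividing by two. -/
lemma two_mul_card_le {w e : ℕ} (h1 : G.IsRegularOfDegree w)
    (h2 : ∀ x y : V, x ≠ y → ¬ G.Adj x y →
      (G.neighborFinset x ∩ G.neighborFinset y).card ≤ e)
    (I : Finset V) (hI : IsAntiClique G I) :
    2 * (I.card * (w + 1)) ≤
      2 * (I.biUnion (closedNbhd G)).card + I.card * (I.card - 1) * e := by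
  induction I using Finset.induction_on with
  | empty => simp
  | insert a J ha ih =>
    have hJ : IsAntiClique G J := fun x hx y hy =>
      hI x (Finset.mem_insert_of_mem hx) y (Finset.mem_insert_of_mem hy)
    have hc := card_inter_biUnion_le G h2 a J ha fun y hy =>
      hI a (Finset.mem_insert_self _ _) y (Finset.mem_insert_of_mem hy) (fun h => ha (h ▸ hy))
    have hu := Finset.card_union_add_card_inter (closedNbhd G a) (J.biUnion (closedNbhd G))
    rw [card_closedNbhd G h1] at hu
    rw [Finset.card_insert_of_notMem ha, Finset.biUnion_insert]
    have ih := ih hJ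
    have hq : J.card * (J.card - 1) * e + 2 * (J.card * e) = (J.card + 1) * J.card * e := by
      rcases Nat.eq_zero_or_pos J.card with h | h
      · simp [h]
      · obtain ⟨k, hk⟩ := Nat.exists_eq_succ_of_ne_zero h.ne'
        simp only [hk, Nat.succ_eq_add_one, Nat.add_sub_cancel]
        ring
    rw [Nat.add_sub_cancel]
    nlinarith

/-- Because `v < (s+1)(w+1) - s(s+1)e/2`, the closed neighbourhoods of `s+1` pairwise non-adjacent
vertices would cover more than `v` vertices. -/
lemma antiClique_card_le {s w e : ℕ} (h1 : G.IsRegularOfDegree w)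
    (h2 : ∀ x y : V, x ≠ y → ¬ G.Adj x y →
      (G.neighborFinset x ∩ G.neighborFinset y).card ≤ e)
    (h4 : Fintype.card V < (s + 1) * (w + 1) - s * (s + 1) * e / 2)
    (I : Finset V) (hI : IsAntiClique G I) : I.card ≤ s := by
  by_contra! hlt
  obtain ⟨J, hJI, hJ⟩ := Finset.exists_subset_card_eq (show s + 1 ≤ I.card from hlt)
  have := two_mul_card_le G h1 h2 J (fun x hx y hy => hI x (hJI hx) y (hJI hy))
  have hle := Finset.card_le_univ (J.biUnion (closedNbhd G))
  rw [hJ, Nat.add_sub_cancel, mul_comm (s + 1) s] at this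
  omega

/-! ### Neighbours of a vertex in a large maximal clique -/

omit [Fintype V] [DecidableEq V] in
/-- A vertex with at least `m` neighbours and at least `n` non-neighbours in a clique not
containing it induces, with suitable clique vertices, a copy of `K̃_{m,n}`. -/
lemma nonempty_tildeK_embedding {m n : ℕ} (C : Finset V) (hC : G.IsClique (C : Set V)) (x : V)
    (hx : x ∉ C) (hm : m ≤ (C.filter (G.Adj x)).card)
    (hn : n ≤ (C.filter (fun z => ¬ G.Adj x z)).card) : Nonempty (tildeK m n ↪g G) := by
  obtain ⟨S, hS, hSc⟩ := Finset.exists_subset_card_eq hm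
  obtain ⟨T, hT, hTc⟩ := Finset.exists_subset_card_eq hn
  have hS' : ∀ z ∈ S, z ∈ C ∧ G.Adj x z := fun z hz => by simpa using hS hz
  have hT' : ∀ z ∈ T, z ∈ C ∧ ¬ G.Adj x z := fun z hz => by simpa using hT hz
  let a : Fin m ≃ S := (S.equivFinOfCardEq hSc).symm
  let b : Fin n ≃ T := (T.equivFinOfCardEq hTc).symm
  let f : Fin (m + n + 1) → V := fun i =>
    if h : i.val < m then (a ⟨i, h⟩ : V)
    else if h' : i.val < m + n then (b ⟨i.val - m, by omega⟩ : V) else x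
  have fS : ∀ i : Fin (m + n + 1), i.val < m → f i ∈ S := fun i h => by simp [f, h]
  have fT : ∀ i : Fin (m + n + 1), ¬ i.val < m → i.val < m + n → f i ∈ T :=
    fun i h h' => by simp [f, h, h']
  have fx : ∀ i : Fin (m + n + 1), ¬ i.val < m + n → f i = x := fun i h => by
    have : ¬ i.val < m := by omega
    simp [f, h, this]
  have fC : ∀ i : Fin (m + n + 1), i.val < m + n → f i ∈ C := fun i h => by
    by_cases h' : i.val < m
    · exact (hS' _ (fS i h')).1
    · exact (hT' _ (fT i h' h)).1
  have hinj : Function.Injective f := by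
    intro i j hij
    by_cases hi : i.val < m + n <;> by_cases hj : j.val < m + n
    · by_cases hi' : i.val < m <;> by_cases hj' : j.val < m
      · simp only [f, hi', hj', dif_pos] at hij
        have := a.injective (Subtype.ext hij)
        simp only [Fin.mk.injEq] at this
        exact Fin.ext this
      · exact absurd (hS' _ (fS i hi')).2 (hij ▸ (hT' _ (fT j hj' hj)).2)
      · exact absurd (hS' _ (fS j hj')).2 (hij ▸ (hT' _ (fT i hi' hi)).2)
      · simp only [f, hi', hj', hi, hj, dif_pos, dif_neg, not_false_eq_true] at hij
        have := b.injective (Subtype.ext hij)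
        simp only [Fin.mk.injEq] at this
        exact Fin.ext (by omega)
    · exact absurd (fC i hi) (by rwa [hij, fx j hj])
    · exact absurd (fC j hj) (by rwa [← hij, fx i hi])
    · exact Fin.ext (by omega)
  refine ⟨⟨⟨f, hinj⟩, ?_⟩⟩
  intro i j
  change G.Adj (f i) (f j) ↔ (tildeK m n).Adj i j
  have key : ∀ i j : Fin (m + n + 1), i.val < m + n → ¬ j.val < m + n →
      (G.Adj (f j) (f i) ↔ i.val < m) := by
    intro i j hi hj
    rw [fx j hj]
    by_cases hi' : i.val < m
    · exact iff_of_true (hS' _ (fS i hi')).2 hi'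
    · exact iff_of_false (hT' _ (fT i hi' hi)).2 hi'
  by_cases hij : i = j
  · subst hij; simp
  have hijv : i.val ≠ j.val := fun h => hij (Fin.ext h)
  rw [tildeK, SimpleGraph.fromRel_adj]
  by_cases hi : i.val < m + n <;> by_cases hj : j.val < m + n
  · exact iff_of_true (hC (fC i hi) (fC j hj) (hinj.ne hij)) ⟨hij, .inl (.inl ⟨hi, hj⟩)⟩
  · rw [G.adj_comm, key i j hi hj]
    omega
  · rw [key j i hj hi]
    omega
  · omega

/-- A vertex outside a maximal clique `C` with `|C| ≥ e + n` has at most `m` neighbours in `C`: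
some `y ∈ C` is not adjacent to it, so it has at most `e` neighbours in `C`, hence at least
`n` non-neighbours there, and `m + 1` neighbours would yield a `K̃_{m+1,n}`. -/
lemma card_neighbors_le {m n e : ℕ}
    (h2 : ∀ x y : V, x ≠ y → ¬ G.Adj x y →
      (G.neighborFinset x ∩ G.neighborFinset y).card ≤ e)
    (h7 : IsEmpty (tildeK (m + 1) n ↪g G)) (C : Finset V) (hC : IsMaxClique G C)
    (hcard : e + n ≤ C.card) (x : V) (hx : x ∉ C) : (C.filter (G.Adj x)).card ≤ m := by
  by_contra! hlt
  have hy : ∃ y ∈ C, ¬ G.Adj x y := by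
    by_contra! hall
    have := hC.2 (insert x C) (by
      rw [Finset.coe_insert, SimpleGraph.isClique_insert]
      exact ⟨hC.1, fun b hb _ => hall b hb⟩) (Finset.subset_insert _ _)
    exact hx (this ▸ Finset.mem_insert_self _ _)
  obtain ⟨y, hyC, hxy⟩ := hy
  have hle : (C.filter (G.Adj x)).card ≤ e := by
    refine le_trans (Finset.card_le_card ?_) (h2 x y (fun h => hx (h ▸ hyC)) hxy)
    intro z hz
    simp only [Finset.mem_filter, Finset.mem_inter, SimpleGraph.mem_neighborFinset] at hz ⊢
    exact ⟨hz.2, hC.1 hyC hz.1 fun h => hxy (h ▸ hz.2)⟩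
  have hsum := Finset.card_filter_add_card_filter_not (s := C) (G.Adj x)
  exact h7.elim (nonempty_tildeK_embedding G C hC.1 x hx hlt (by omega)).some

/-! ### Cliques from maximum anti-cliques -/

lemma exists_isMaxClique_superset (B : Finset V) (hB : G.IsClique (B : Set V)) :
    ∃ C, IsMaxClique G C ∧ B ⊆ C := by
  classical
  obtain ⟨C, hC, hmax⟩ := Finset.exists_max_image
    (Finset.univ.filter fun C : Finset V => G.IsClique (C : Set V) ∧ B ⊆ C) Finset.card
    ⟨B, by simp [hB]⟩
  simp only [Finset.mem_filter, Finset.mem_univ, true_and] at hC hmax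
  exact ⟨C, ⟨hC.1, fun C' h h' =>
    (Finset.eq_of_subset_of_card_le h' (hmax C' ⟨h, hC.2.trans h'⟩)).symm⟩, hC.2⟩

omit [Fintype V] [DecidableRel G.Adj] in
lemma isAntiClique_insert {I : Finset V} {a : V} (hI : IsAntiClique G I)
    (ha : ∀ y ∈ I, ¬ G.Adj a y) : IsAntiClique G (insert a I) := by
  intro p hp q hq hpq
  rcases Finset.mem_insert.1 hp with rfl | hp' <;> rcases Finset.mem_insert.1 hq with rfl | hq'
  · exact absurd rfl hpq
  · exact ha q hq'
  · exact fun h => ha p hp' h.symm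
  · exact hI p hp' q hq' hpq

/-- In an anti-clique `I` of maximum size, the private closed neighbourhood
`B = N[y] \ ⋃_{z ∈ I, z ≠ y} N[z]` of `y ∈ I` is a clique: two non-adjacent vertices of `B` could
replace `y` in `I`. -/
lemma exists_private_clique {s w e : ℕ} (h1 : G.IsRegularOfDegree w)
    (h2 : ∀ x y : V, x ≠ y → ¬ G.Adj x y →
      (G.neighborFinset x ∩ G.neighborFinset y).card ≤ e)
    (hle : (s - 1) * e ≤ w) (I : Finset V) (hI : IsAntiClique G I) (hIs : I.card ≤ s)
    (hmax : ∀ J, IsAntiClique G J → J.card ≤ I.card) (y : V) (hy : y ∈ I) :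
    ∃ B : Finset V, G.IsClique (B : Set V) ∧ w - (s - 1) * e + 1 ≤ B.card ∧ y ∈ B ∧
      ∀ z ∈ B, z ∉ I.erase y ∧ ∀ u ∈ I.erase y, ¬ G.Adj z u := by
  have hE : IsAntiClique G (I.erase y) := fun p hp q hq =>
    hI p (Finset.mem_of_mem_erase hp) q (Finset.mem_of_mem_erase hq)
  have hyE : ∀ u ∈ I.erase y, ¬ G.Adj y u := fun u hu =>
    hI y hy u (Finset.mem_of_mem_erase hu) (Finset.ne_of_mem_erase hu).symm
  have hcE := Finset.card_erase_add_one hy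
  have hpriv : ∀ z ∈ closedNbhd G y \ (I.erase y).biUnion (closedNbhd G),
      z ∉ I.erase y ∧ ∀ u ∈ I.erase y, ¬ G.Adj z u := by
    intro z hz
    have hz2 := (Finset.mem_sdiff.1 hz).2
    simp only [Finset.mem_biUnion, mem_closedNbhd, not_exists, not_and, not_or] at hz2
    exact ⟨fun h => (hz2 z h).1 rfl, fun u hu h => (hz2 u hu).2 h.symm⟩
  refine ⟨closedNbhd G y \ (I.erase y).biUnion (closedNbhd G), ?_, ?_, ?_, hpriv⟩
  · intro p hp q hq hpq
    by_contra hnadj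
    have hp := hpriv p hp
    have hq := hpriv q hq
    have hJ : IsAntiClique G (insert p (insert q (I.erase y))) := by
      refine isAntiClique_insert G (isAntiClique_insert G hE hq.2) ?_
      intro u hu
      rcases Finset.mem_insert.1 hu with rfl | hu
      · exact hnadj
      · exact hp.2 u hu
    have := hmax _ hJ
    rw [Finset.card_insert_of_notMem (by simp only [Finset.mem_insert, not_or]; exact ⟨hpq, hp.1⟩),
      Finset.card_insert_of_notMem hq.1] at this
    omega
  · have hc := card_inter_biUnion_le G h2 y (I.erase y) (Finset.notMem_erase _ _) hyE
    have hd := Finset.card_sdiff_add_card_inter (closedNbhd G y)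
      ((I.erase y).biUnion (closedNbhd G))
    rw [card_closedNbhd G h1] at hd
    have : (I.erase y).card * e ≤ (s - 1) * e := Nat.mul_le_mul_right _ (by omega)
    omega
  · simp only [Finset.mem_sdiff, Finset.mem_biUnion, mem_closedNbhd, true_or, true_and, not_exists,
      not_and, not_or]
    exact fun u hu => ⟨fun h => Finset.ne_of_mem_erase hu h.symm, fun h => hyE u hu h.symm⟩

end

/-- Under hypotheses (H), every vertex of `G` lies in some weak clique. -/
theorem mem_weakClique
    {V : Type*} [Fintype V] [DecidableEq V] (G : SimpleGraph V) [DecidableRel G.Adj]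
    (s m n v w e : ℕ)
    (hs : 1 ≤ s) (hm : 1 ≤ m) (hn : 1 ≤ n) (hv : 1 ≤ v) (hw : 1 ≤ w) (he : 1 ≤ e)
    (hV : Fintype.card V = v)
    (h1 : G.IsRegularOfDegree w)
    (h2 : ∀ x y : V, x ≠ y → ¬ G.Adj x y →
      (G.neighborFinset x ∩ G.neighborFinset y).card ≤ e)
    (h3 : (s - 1) * e + m * s - 1 < w)
    (h4 : v < (s + 1) * (w + 1) - s * (s + 1) * e / 2)
    (h5 : e + n ≤ m * s + 1)
    (h6 : m < e)
    (h7 : IsEmpty (tildeK (m + 1) n ↪g G))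
    : ∀ x : V, ∃ C : Finset V, IsWeakClique G s w e C ∧ x ∈ C := by
  classical
  intro x
  subst hV
  have hα := antiClique_card_le G h1 h2 h4
  have hms : m ≤ m * s := Nat.le_mul_of_pos_right m hs
  obtain ⟨I₀, hI₀, hmax₀⟩ := Finset.exists_max_image
    (Finset.univ.filter fun I : Finset V => IsAntiClique G I) Finset.card
    ⟨∅, Finset.mem_filter.2 ⟨Finset.mem_univ _, by simp [IsAntiClique]⟩⟩
  -- Among the maximum anti-cliques, take one with as few neighbours of `x` as possible.
  obtain ⟨I, hI, hmin⟩ := Finset.exists_min_image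
    (Finset.univ.filter fun I : Finset V => IsAntiClique G I ∧ I.card = I₀.card)
    (fun I => (I.filter (G.Adj x)).card) ⟨I₀, by simpa using hI₀⟩
  simp only [Finset.mem_filter, Finset.mem_univ, true_and] at hI hI₀ hmax₀ hmin
  obtain ⟨hIa, hIc⟩ := hI
  have hmax : ∀ J, IsAntiClique G J → J.card ≤ I.card := fun J hJ => hIc ▸ hmax₀ J hJ
  by_contra hno
  push Not at hno
  have hweak : ∀ y ∈ I, ∃ C B : Finset V, IsWeakClique G s w e C ∧ B ⊆ C ∧ y ∈ B ∧
      m * s + 1 ≤ B.card ∧ ∀ z ∈ B, z ∉ I.erase y ∧ ∀ u ∈ I.erase y, ¬ G.Adj z u := by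
    intro y hy
    obtain ⟨B, hB, hBc, hyB, hBp⟩ :=
      exists_private_clique (s := s) G h1 h2 (by omega) I hIa (hα I hIa) hmax y hy
    obtain ⟨C, hC, hBC⟩ := exists_isMaxClique_superset G B hB
    exact ⟨C, B, ⟨hC, hBc.trans (Finset.card_le_card hBC)⟩, hBC, hyB, by omega, hBp⟩
  have hxI : x ∉ I := fun hx => by
    obtain ⟨C, B, hC, hBC, hxB, -, -⟩ := hweak x hx
    exact hno C hC (hBC hxB)
  have hadj : ∃ y ∈ I, G.Adj x y := by
    by_contra! h
    have := hmax _ (isAntiClique_insert G hIa h)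
    rw [Finset.card_insert_of_notMem hxI] at this
    omega
  obtain ⟨y, hy, hxy⟩ := hadj
  obtain ⟨C, B, hC, hBC, -, hBc, hBp⟩ := hweak y hy
  have hCm := card_neighbors_le G h2 h7 C hC.1
    (by have := Finset.card_le_card hBC; omega) x (hno C hC)
  -- `|B| > m`, so some vertex of `B` is not adjacent to `x`; it can replace `y` in `I`.
  have hz : ∃ z ∈ B, ¬ G.Adj x z := by
    by_contra! h
    have : B ⊆ C.filter (G.Adj x) := fun z hz => Finset.mem_filter.2 ⟨hBC hz, h z hz⟩
    have := Finset.card_le_card this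
    omega
  obtain ⟨z, hzB, hxz⟩ := hz
  have hp := hBp z hzB
  have hE : IsAntiClique G (I.erase y) := fun p hp q hq =>
    hIa p (Finset.mem_of_mem_erase hp) q (Finset.mem_of_mem_erase hq)
  have hnew := hmin (insert z (I.erase y)) ⟨isAntiClique_insert G hE hp.2, by
    rw [Finset.card_insert_of_notMem hp.1, Finset.card_erase_add_one hy, hIc]⟩
  rw [Finset.filter_insert, if_neg hxz, Finset.filter_erase] at hnew
  have := Finset.card_erase_lt_of_mem (Finset.mem_filter.2 ⟨hy, hxy⟩)
  omega
end

section
/- Assume hypotheses (H), and let s₀ be the maximum order of an anti-clique in G. Then the number of weak cliques of G is exactly s₀. -/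
/-!
The vertices of a maximum anti-clique and the weak cliques are matched against each other.

*Geometry of weak cliques.* A weak clique has more than `m * s` vertices, hence at least `e + n`.
A vertex `x` outside it misses some vertex `y` of it, so its neighbours in the clique are common
neighbours of `x` and `y`, at most `e` of them. At least `n` vertices of the clique are thus missed
by `x`, and `K̃_{m+1,n}`-freeness leaves at most `m` neighbours (`card_adj_le`). Therefore two
distinct weak cliques share at most `m` vertices (`card_inter_le`).

*At most `s` independent vertices.* By inclusion–exclusion, `s + 1` pairwise non-adjacent vertices
would have closed neighbourhoods covering more than `v` vertices (`anticlique_union`).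

*At least `s₀` weak cliques.* If `x` lies in a maximum anti-clique `I`, the vertices of the closed
neighbourhood of `x` adjacent to no other member of `I` form a clique: two non-adjacent ones could
replace `x` and enlarge `I`. There are at least `w + 1 - (s - 1) e` of them, so they extend to a
weak clique through `x` (`exists_weak`), and distinct members of `I` give distinct weak cliques.

*At most `s₀` weak cliques.* From any `t ≤ s + 1` weak cliques one picks pairwise non-adjacent
representatives greedily, each one outside the cliques still to come; at most `m (t - 1) ≤ m s`
vertices are excluded at each step (`exists_transversal`).
-/

open SimpleGraph

section Helpers

variable {V : Type*} [Fintype V] [DecidableEq V] {G : SimpleGraph V} [DecidableRel G.Adj]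

/-- An explicit copy of `K̃_{a,n}`: a clique `A ∪ B` and a vertex `x` adjacent to all of `A` and to
nothing in `B`. -/
lemma tildeK_embeds {a n : ℕ} {A B : Finset V} {x : V}
    (hA : A.card = a) (hB : B.card = n) (hAB : Disjoint A B)
    (hc : G.IsClique ((A ∪ B : Finset V) : Set V)) (hx : x ∉ A ∪ B)
    (hxA : ∀ y ∈ A, G.Adj x y) (hxB : ∀ y ∈ B, ¬ G.Adj x y) :
    Nonempty (tildeK a n ↪g G) := by
  classical
  let eA := A.equivFinOfCardEq hA
  let eB := B.equivFinOfCardEq hB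
  let φ : Fin (a + n + 1) → V := fun i =>
    if h : i.val < a then (eA.symm ⟨i, h⟩ : V)
    else if h' : i.val < a + n then (eB.symm ⟨i.val - a, by omega⟩ : V) else x
  have φA : ∀ i : Fin (a + n + 1), i.val < a → φ i ∈ A := by
    intro i h
    simp [φ, h]
  have φB : ∀ i : Fin (a + n + 1), ¬ i.val < a → i.val < a + n → φ i ∈ B := by
    intro i h h'
    simp [φ, h, h']
  have φx : ∀ i : Fin (a + n + 1), ¬ i.val < a + n → φ i = x := by
    intro i h
    have : ¬ i.val < a := by omega
    simp [φ, h, this]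
  have φK : ∀ i : Fin (a + n + 1), i.val < a + n → φ i ∈ A ∪ B := by
    intro i h
    by_cases h' : i.val < a
    · exact Finset.mem_union_left _ (φA i h')
    · exact Finset.mem_union_right _ (φB i h' h)
  have inj : Function.Injective φ := by
    intro i j hij
    by_cases hi : i.val < a + n <;> by_cases hj : j.val < a + n
    · by_cases hi' : i.val < a <;> by_cases hj' : j.val < a
      · simp only [φ, hi', hj', dif_pos] at hij
        have := eA.symm.injective (Subtype.ext hij)
        simp only [Fin.mk.injEq] at this
        exact Fin.ext this
      · exact absurd (hij ▸ φB j hj' hj) (Finset.disjoint_left.1 hAB (φA i hi'))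
      · exact absurd (hij ▸ φB i hi' hi) (Finset.disjoint_left.1 hAB (φA j hj'))
      · simp only [φ, hi', hj', hi, hj, dif_pos, dif_neg, not_false_eq_true] at hij
        have := eB.symm.injective (Subtype.ext hij)
        simp only [Fin.mk.injEq] at this
        exact Fin.ext (by omega)
    · exact absurd (φx j hj ▸ hij ▸ φK i hi) hx
    · exact absurd (φx i hi ▸ hij ▸ φK j hj) hx
    · exact Fin.ext (by omega)
  refine ⟨⟨⟨φ, inj⟩, ?_⟩⟩
  intro i j
  simp only [tildeK, SimpleGraph.fromRel_adj, Function.Embedding.coeFn_mk]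
  by_cases hij : i = j
  · simp [hij]
  by_cases hi : i.val < a + n <;> by_cases hj : j.val < a + n
  · have := hc (φK i hi) (φK j hj) (inj.ne hij)
    simp [this, hi, hj, hij]
  · rw [φx j hj]
    have hj' : j.val = a + n := by omega
    by_cases hi' : i.val < a
    · have := (hxA _ (φA i hi')).symm
      simp [this, hij, hj', hi']
    · have : ¬ G.Adj (φ i) x := fun h => hxB _ (φB i hi' hi) h.symm
      simp only [this, false_iff]
      omega
  · rw [φx i hi]
    have hi2 : i.val = a + n := by omega
    by_cases hj' : j.val < a
    · have := hxA _ (φA j hj')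
      simp [this, hij, hi2, hj']
    · have : ¬ G.Adj x (φ j) := hxB _ (φB j hj' hj)
      simp only [this, false_iff]
      omega
  · exact absurd (Fin.ext (by omega)) hij

/-- A vertex outside a large maximal clique has few neighbours in it. -/
lemma card_adj_le {m n e : ℕ}
    (h2 : ∀ x y : V, x ≠ y → ¬ G.Adj x y →
      (G.neighborFinset x ∩ G.neighborFinset y).card ≤ e)
    (h7 : IsEmpty (tildeK (m + 1) n ↪g G))
    {C : Finset V} (hC : IsMaxClique G C) (hcard : e + n ≤ C.card) {x : V} (hx : x ∉ C) :
    (C.filter (fun y => G.Adj x y)).card ≤ m := by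
  obtain ⟨y, hy, hxy⟩ : ∃ y ∈ C, ¬ G.Adj x y := by
    by_contra! hall
    have := hC.2 (insert x C) (by
      rw [Finset.coe_insert]
      exact hC.1.insert (fun b hb _ => hall b hb)) (Finset.subset_insert _ _)
    exact hx (this ▸ Finset.mem_insert_self x C)
  have hne : x ≠ y := fun h => hx (h ▸ hy)
  have hle : (C.filter (fun z => G.Adj x z)).card ≤ e := by
    refine le_trans (Finset.card_le_card ?_) (h2 x y hne hxy)
    intro z hz
    rw [Finset.mem_filter] at hz
    simp only [Finset.mem_inter, SimpleGraph.mem_neighborFinset]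
    exact ⟨hz.2, hC.1 hy hz.1 (fun h => hxy (h ▸ hz.2))⟩
  have hsum := Finset.card_filter_add_card_filter_not (s := C) (fun z => G.Adj x z)
  by_contra! hlt
  obtain ⟨A, hA, hAc⟩ := Finset.exists_subset_card_eq (Nat.succ_le_of_lt hlt)
  obtain ⟨B, hB, hBc⟩ := Finset.exists_subset_card_eq
    (show n ≤ (C.filter (fun z => ¬ G.Adj x z)).card by omega)
  have hsub : A ∪ B ⊆ C := Finset.union_subset
    (hA.trans (Finset.filter_subset _ _)) (hB.trans (Finset.filter_subset _ _))
  have hxA : ∀ z ∈ A, G.Adj x z := fun z hz => (Finset.mem_filter.1 (hA hz)).2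
  have hxB : ∀ z ∈ B, ¬ G.Adj x z := fun z hz => (Finset.mem_filter.1 (hB hz)).2
  exact not_isEmpty_iff.2 (tildeK_embeds hAc hBc
    (Finset.disjoint_left.2 fun z hz hz' => hxB z hz' (hxA z hz))
    (hC.1.subset (Finset.coe_subset.2 hsub)) (fun h => hx (hsub h)) hxA hxB) h7

lemma card_inter_le_s9 {m n e : ℕ}
    (h2 : ∀ x y : V, x ≠ y → ¬ G.Adj x y →
      (G.neighborFinset x ∩ G.neighborFinset y).card ≤ e)
    (h7 : IsEmpty (tildeK (m + 1) n ↪g G))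
    {C D : Finset V} (hC : IsMaxClique G C) (hD : IsMaxClique G D)
    (hcard : e + n ≤ C.card) (hne : D ≠ C) : (C ∩ D).card ≤ m := by
  obtain ⟨x, hxD, hxC⟩ : ∃ x ∈ D, x ∉ C := by
    by_contra! h
    exact hne (hD.2 C hC.1 h).symm
  refine le_trans (Finset.card_le_card ?_) (card_adj_le h2 h7 hC hcard hxC)
  intro z hz
  rw [Finset.mem_inter] at hz
  exact Finset.mem_filter.2 ⟨hz.1, hD.1 hxD hz.2 (fun h => hxC (h ▸ hz.1))⟩

/-- Truncated inclusion–exclusion for the closed neighbourhoods of an anti-clique. -/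
lemma anticlique_union {w e : ℕ} (h1 : G.IsRegularOfDegree w)
    (h2 : ∀ x y : V, x ≠ y → ¬ G.Adj x y →
      (G.neighborFinset x ∩ G.neighborFinset y).card ≤ e)
    (I : Finset V) : IsAntiClique G I →
    I.card * (w + 1) ≤
      (I.biUnion fun x => insert x (G.neighborFinset x)).card + I.card.choose 2 * e := by
  induction I using Finset.induction_on with
  | empty => simp
  | insert x I hx ih =>
    intro hI
    have ih := ih (fun a ha b hb => hI a (Finset.mem_insert_of_mem ha) b
      (Finset.mem_insert_of_mem hb))
    rw [Finset.biUnion_insert, Finset.card_insert_of_notMem hx]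
    set U := I.biUnion fun x => insert x (G.neighborFinset x) with hU
    have hN : (insert x (G.neighborFinset x)).card = w + 1 := by
      rw [Finset.card_insert_of_notMem (by simp), SimpleGraph.card_neighborFinset_eq_degree, h1 x]
    have hsum := Finset.card_union_add_card_inter (insert x (G.neighborFinset x)) U
    have hinter : (insert x (G.neighborFinset x) ∩ U).card ≤ I.card * e := by
      refine le_trans (Finset.card_le_card (t := I.biUnion fun y =>
        G.neighborFinset x ∩ G.neighborFinset y) ?_) (Finset.card_biUnion_le_card_mul _ _ _ ?_)
      · intro z hz
        rw [Finset.mem_inter, hU, Finset.mem_biUnion] at hz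
        obtain ⟨hz1, y, hy, hz2⟩ := hz
        have hxy : x ≠ y := fun h => hx (h ▸ hy)
        have hn := hI x (Finset.mem_insert_self _ _) y (Finset.mem_insert_of_mem hy) hxy
        rw [Finset.mem_biUnion]
        refine ⟨y, hy, ?_⟩
        simp only [Finset.mem_insert, SimpleGraph.mem_neighborFinset] at hz1 hz2
        simp only [Finset.mem_inter, SimpleGraph.mem_neighborFinset]
        rcases hz1 with rfl | hz1
        · rcases hz2 with rfl | hz2
          · exact absurd rfl hxy
          · exact absurd hz2.symm hn
        · rcases hz2 with rfl | hz2
          · exact absurd hz1 hn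
          · exact ⟨hz1, hz2⟩
      · intro y hy
        have hxy : x ≠ y := fun h => hx (h ▸ hy)
        exact h2 x y hxy
          (hI x (Finset.mem_insert_self _ _) y (Finset.mem_insert_of_mem hy) hxy)
    have hch : (I.card + 1).choose 2 = I.card + I.card.choose 2 := by
      rw [Nat.choose_succ_succ' I.card 1, Nat.choose_one_right]
    rw [hch, add_mul, add_mul, one_mul]
    omega

/-- Greedy choice: `T'` is the set of cliques already served, and the chosen vertices avoid the
members of `T` still to be served. -/
lemma exists_transversal {m s : ℕ} (T : Finset (Finset V)) (hT : T.card ≤ s + 1)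
    (hbig : ∀ C ∈ T, m * s < C.card)
    (hadj : ∀ C ∈ T, ∀ x ∉ C, (C.filter (fun y => G.Adj x y)).card ≤ m)
    (hinter : ∀ C ∈ T, ∀ D ∈ T, D ≠ C → (C ∩ D).card ≤ m)
    (T' : Finset (Finset V)) : T' ⊆ T →
    ∃ I : Finset V, IsAntiClique G I ∧ I.card = T'.card ∧ ∀ D ∈ T \ T', ∀ x ∈ I, x ∉ D := by
  induction T' using Finset.induction_on with
  | empty => exact fun _ => ⟨∅, by simp [IsAntiClique], by simp, by simp⟩
  | insert C T' hC ih =>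
    intro hsub
    have hCT : C ∈ T := hsub (Finset.mem_insert_self _ _)
    obtain ⟨I, hI, hIc, hav⟩ := ih ((Finset.subset_insert _ _).trans hsub)
    have hIC : ∀ x ∈ I, x ∉ C := hav C (Finset.mem_sdiff.2 ⟨hCT, hC⟩)
    have hb1 : (I.biUnion fun y => C.filter (fun z => G.Adj y z)).card ≤ I.card * m :=
      Finset.card_biUnion_le_card_mul _ _ _ (fun y hy => hadj C hCT y (hIC y hy))
    have hb2 : ((T \ insert C T').biUnion fun D => C ∩ D).card ≤ (T \ insert C T').card * m := by
      refine Finset.card_biUnion_le_card_mul _ _ _ (fun D hD => ?_)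
      rw [Finset.mem_sdiff, Finset.mem_insert, not_or] at hD
      exact hinter C hCT D hD.1 hD.2.1
    have hcard : I.card + (T \ insert C T').card ≤ s := by
      have h := Finset.card_sdiff_add_card_eq_card hsub
      rw [Finset.card_insert_of_notMem hC] at h
      omega
    have hlt : ((I.biUnion fun y => C.filter (fun z => G.Adj y z)) ∪
        ((T \ insert C T').biUnion fun D => C ∩ D)).card < C.card := by
      refine lt_of_le_of_lt (Finset.card_union_le _ _) ?_
      have h3 : (I.card + (T \ insert C T').card) * m ≤ s * m := Nat.mul_le_mul_right _ hcard
      have h4 := hbig C hCT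
      rw [mul_comm m s] at h4
      rw [add_mul] at h3
      omega
    obtain ⟨x, hxC, hx⟩ := Finset.exists_mem_notMem_of_card_lt_card hlt
    simp only [Finset.mem_union, Finset.mem_biUnion, Finset.mem_filter, Finset.mem_inter,
      not_or, not_exists, not_and] at hx
    obtain ⟨hx1, hx2⟩ := hx
    have hxI : x ∉ I := fun h => hIC x h hxC
    refine ⟨insert x I, ?_, ?_, ?_⟩
    · intro a ha b hb hab
      rw [Finset.mem_insert] at ha hb
      rcases ha with rfl | ha <;> rcases hb with rfl | hb
      · exact absurd rfl hab
      · exact fun h => hx1 b hb hxC h.symm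
      · exact hx1 a ha hxC
      · exact hI a ha b hb hab
    · rw [Finset.card_insert_of_notMem hxI, Finset.card_insert_of_notMem hC, hIc]
    · intro D hD y hy
      rw [Finset.mem_insert] at hy
      rcases hy with rfl | hy
      · exact hx2 D hD hxC
      · refine hav D ?_ y hy
        rw [Finset.mem_sdiff, Finset.mem_insert, not_or] at hD
        exact Finset.mem_sdiff.2 ⟨hD.1, hD.2.2⟩

lemma exists_maxClique_s9 {A : Finset V} (hA : G.IsClique (A : Set V)) :
    ∃ C, A ⊆ C ∧ IsMaxClique G C := by
  obtain ⟨C, hAC, hC⟩ :=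
    (Set.toFinite {C : Finset V | G.IsClique (C : Set V)}).exists_le_maximal hA
  exact ⟨C, hAC, hC.prop, fun C' h hsub => (hC.eq_of_le h hsub).symm⟩

/-- Every vertex of a maximum anti-clique lies in a weak clique. -/
lemma exists_weak {s w e : ℕ} (h1 : G.IsRegularOfDegree w)
    (h2 : ∀ x y : V, x ≠ y → ¬ G.Adj x y →
      (G.neighborFinset x ∩ G.neighborFinset y).card ≤ e)
    (h3 : (s - 1) * e ≤ w)
    {I : Finset V} (hI : IsAntiClique G I) (hIs : I.card ≤ s)
    (hmax : ∀ J : Finset V, IsAntiClique G J → J.card ≤ I.card) {x : V} (hx : x ∈ I) :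
    ∃ C, IsWeakClique G s w e C ∧ x ∈ C := by
  set A := insert x (G.neighborFinset x) \
    ((I.erase x).biUnion fun y => G.neighborFinset x ∩ G.neighborFinset y) with hAdef
  have hxA : x ∈ A := by simp [hAdef]
  have hAI : ∀ z ∈ A, ∀ y ∈ I.erase x, ¬ G.Adj z y ∧ z ≠ y := by
    intro z hz y hy
    have hyI := Finset.mem_erase.1 hy
    have hn := hI x hx y hyI.2 hyI.1.symm
    simp only [hAdef, Finset.mem_sdiff, Finset.mem_insert, SimpleGraph.mem_neighborFinset,
      Finset.mem_biUnion, Finset.mem_inter, not_exists, not_and] at hz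
    rcases hz with ⟨rfl | hz, hz'⟩
    · exact ⟨hn, hyI.1.symm⟩
    · exact ⟨fun h => hz' y hy hz h.symm, fun h => hn (h ▸ hz)⟩
  have hcl : G.IsClique (A : Set V) := by
    intro y hy z hz hyz
    by_contra hn
    have hy1 := hAI y hy
    have hz1 := hAI z hz
    have hz2 : z ∉ I.erase x := fun h => (hz1 z h).2 rfl
    have hy2 : y ∉ insert z (I.erase x) := by
      rw [Finset.mem_insert, not_or]
      exact ⟨hyz, fun h => (hy1 y h).2 rfl⟩
    have hJ : IsAntiClique G (insert y (insert z (I.erase x))) := by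
      intro a ha b hb hab
      simp only [Finset.mem_insert] at ha hb
      rcases ha with rfl | rfl | ha <;> rcases hb with rfl | rfl | hb
      · exact absurd rfl hab
      · exact hn
      · exact (hy1 b hb).1
      · exact fun h => hn h.symm
      · exact absurd rfl hab
      · exact (hz1 b hb).1
      · exact fun h => (hy1 a ha).1 h.symm
      · exact fun h => (hz1 a ha).1 h.symm
      · exact hI a (Finset.mem_of_mem_erase ha) b (Finset.mem_of_mem_erase hb) hab
    have := hmax _ hJ
    rw [Finset.card_insert_of_notMem hy2, Finset.card_insert_of_notMem hz2] at this
    have := Finset.card_erase_add_one hx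
    omega
  obtain ⟨C, hAC, hC⟩ := exists_maxClique_s9 hcl
  refine ⟨C, ⟨hC, le_trans ?_ (Finset.card_le_card hAC)⟩, hAC hxA⟩
  have hN : (insert x (G.neighborFinset x)).card = w + 1 := by
    rw [Finset.card_insert_of_notMem (by simp), SimpleGraph.card_neighborFinset_eq_degree, h1 x]
  have hb : ((I.erase x).biUnion fun y => G.neighborFinset x ∩ G.neighborFinset y).card
      ≤ (I.erase x).card * e := by
    refine Finset.card_biUnion_le_card_mul _ _ _ (fun y hy => ?_)
    have hyI := Finset.mem_erase.1 hy
    exact h2 x y hyI.1.symm (hI x hx y hyI.2 hyI.1.symm)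
  have hd := Finset.le_card_sdiff
    ((I.erase x).biUnion fun y => G.neighborFinset x ∩ G.neighborFinset y)
    (insert x (G.neighborFinset x))
  have he : (I.erase x).card * e ≤ (s - 1) * e := by
    refine Nat.mul_le_mul_right _ ?_
    have := Finset.card_erase_add_one hx
    omega
  rw [← hAdef] at hd
  omega

end Helpers

/-- Under hypotheses (H), with `s₀` the maximum order of an anti-clique,
the number of weak cliques of `G` is exactly `s₀`. -/
theorem card_weakCliques
    {V : Type*} [Fintype V] [DecidableEq V] (G : SimpleGraph V) [DecidableRel G.Adj]
    (s m n v w e : ℕ)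
    (hs : 1 ≤ s) (hm : 1 ≤ m) (hn : 1 ≤ n) (hv : 1 ≤ v) (hw : 1 ≤ w) (he : 1 ≤ e)
    (hV : Fintype.card V = v)
    (h1 : G.IsRegularOfDegree w)
    (h2 : ∀ x y : V, x ≠ y → ¬ G.Adj x y →
      (G.neighborFinset x ∩ G.neighborFinset y).card ≤ e)
    (h3 : (s - 1) * e + m * s - 1 < w)
    (h4 : v < (s + 1) * (w + 1) - s * (s + 1) * e / 2)
    (h5 : e + n ≤ m * s + 1)
    (h6 : m < e)
    (h7 : IsEmpty (tildeK (m + 1) n ↪g G))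
    (s₀ : ℕ) (hs₀ : IsGreatest {k : ℕ | ∃ I : Finset V, IsAntiClique G I ∧ I.card = k} s₀)
    : {C : Finset V | IsWeakClique G s w e C}.ncard = s₀ := by
  classical
  have hmax : ∀ J : Finset V, IsAntiClique G J → J.card ≤ s₀ := fun J hJ => hs₀.2 ⟨J, hJ, rfl⟩
  obtain ⟨I, hI, hIc⟩ := hs₀.1
  have hs₀s : s₀ ≤ s := by
    by_contra! hlt
    obtain ⟨J, hJI, hJc⟩ := Finset.exists_subset_card_eq (show s + 1 ≤ I.card by omega)
    have hu := anticlique_union h1 h2 J (fun a ha b hb => hI a (hJI ha) b (hJI hb))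
    have hle := Finset.card_le_univ (J.biUnion fun x => insert x (G.neighborFinset x))
    have hch : s * (s + 1) * e / 2 = (s + 1).choose 2 * e := by
      have h := Nat.add_one_mul_choose_eq s 1
      rw [Nat.choose_one_right] at h
      rw [show s * (s + 1) * e = 2 * ((s + 1).choose 2 * e) by
        rw [mul_comm s (s + 1), h]; ring]
      omega
    rw [hJc] at hu
    rw [hch] at h4
    omega
  have hms : 1 ≤ m * s := Nat.mul_pos hm hs
  have hbig : ∀ C, IsWeakClique G s w e C → m * s < C.card := by
    intro C hC
    have := hC.2
    omega
  rw [Set.ncard_eq_toFinset_card']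
  apply le_antisymm
  · by_contra! hlt
    obtain ⟨T, hT, hTc⟩ := Finset.exists_subset_card_eq (Nat.succ_le_of_lt hlt)
    have hw' : ∀ C ∈ T, IsWeakClique G s w e C := fun C hC => by simpa using hT hC
    have hen : ∀ C ∈ T, e + n ≤ C.card := fun C hC => by
      have := hbig C (hw' C hC)
      omega
    obtain ⟨J, hJ, hJc, -⟩ := exists_transversal (G := G) (m := m) (s := s) T (by omega)
      (fun C hC => hbig C (hw' C hC))
      (fun C hC x hx => card_adj_le h2 h7 (hw' C hC).1 (hen C hC) hx)
      (fun C hC D hD hne => card_inter_le_s9 h2 h7 (hw' C hC).1 (hw' D hD).1 (hen C hC) hne)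
      T (Finset.Subset.refl _)
    have := hmax J hJ
    omega
  · have hex : ∀ x ∈ I, ∃ C, IsWeakClique G s w e C ∧ x ∈ C := fun x hx =>
      exists_weak h1 h2 (by omega) hI (by omega) (fun J hJ => hIc ▸ hmax J hJ) hx
    choose! f hf hxf using hex
    rw [← hIc]
    refine Finset.card_le_card_of_injOn f (fun x hx => by simpa using hf x hx) ?_
    intro x hx y hy hxy
    by_contra hne
    exact hI x hx y hy hne ((hf x hx).1.1 (hxf x hx) (hxy ▸ hxf y hy) hne)
end
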